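/- arXiv:2009.13728 — 2 statements merged into one kernel-verified Lean document; each statement's English description precedes it below -/
import Mathlib

section
/- Let a and b be real constants such that none of −a, −b, −(a+b) is a natural number (including 0), and assume ab < 1. Then the function f(z) = z F(a,b;a+b;z) is not convex in 𝔻; that is, it is not the case that f is injective on 𝔻 with f(𝔻) a convex subset of ℂ. -/
open Complex Filter MeasureTheory Metric Set

/-- The Gaussian hypergeometric function on the unit disc (power series). -/
noncomputable def hyperF (a b c : ℝ) (z : ℂ) : ℂ :=
  ∑' n : ℕ, (((ascPochhammer ℝ n).eval a * (ascPochhammer ℝ n).eval b /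
      ((ascPochhammer ℝ n).eval c * (n.factorial : ℝ)) : ℝ) : ℂ) * z ^ n


lemma aux_tail (v e : ℕ → ℝ) (hv : Tendsto v atTop (nhds 0)) (he : Tendsto e atTop (nhds 0))
    (N : ℕ) (h : ∀ n ≥ N, |v (n+1) - v n| ≤ e n - e (n+1)) : ∀ n ≥ N, |v n| ≤ e n := by
  intro n hn
  have h1 : Antitone (fun k => v (n+k) + e (n+k)) := by
    apply antitone_nat_of_succ_le
    intro k
    have := h (n+k) (by omega)
    have := (abs_le.1 this)
    rw [← add_assoc]; linarith [this.2]
  have h2 : Monotone (fun k => v (n+k) - e (n+k)) := by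
    apply monotone_nat_of_le_succ
    intro k
    have := h (n+k) (by omega)
    have := (abs_le.1 this)
    rw [← add_assoc]; linarith [this.1]
  have hs : Tendsto (fun k => n + k) atTop atTop := tendsto_atTop_mono (fun k => Nat.le_add_left k n) tendsto_id
  have t1 : Tendsto (fun k => v (n+k) + e (n+k)) atTop (nhds (0+0)) :=
    (hv.comp hs).add (he.comp hs)
  have t2 : Tendsto (fun k => v (n+k) - e (n+k)) atTop (nhds (0-0)) :=
    (hv.comp hs).sub (he.comp hs)
  have a1 := h1.le_of_tendsto t1 0
  have a2 := h2.ge_of_tendsto t2 0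
  simp only [add_zero, sub_zero] at a1 a2
  rw [abs_le]; constructor <;> linarith

lemma aux_lim (a b : ℝ)
    (ha : ∀ n : ℕ, a ≠ -(n : ℝ)) (hb : ∀ n : ℕ, b ≠ -(n : ℝ))
    (hab : ∀ n : ℕ, a + b ≠ -(n : ℝ)) : ∃ L : ℝ, L ≠ 0 ∧ 
    Tendsto (fun n : ℕ => ((n:ℝ)+1) * ((ascPochhammer ℝ n).eval a * (ascPochhammer ℝ n).eval b /
      ((ascPochhammer ℝ n).eval (a+b) * (n.factorial : ℝ)))) atTop (nhds L) := by
  have hp : ∀ (n : ℕ) (s : ℝ), (∀ n : ℕ, s ≠ -(n : ℝ)) → (ascPochhammer ℝ n).eval s ≠ 0 := by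
    intro n s hs
    induction n with
    | zero => simp
    | succ k ih =>
      rw [ascPochhammer_succ_eval]
      refine mul_ne_zero ih ?_
      intro h0; exact hs k (by linarith)
  have hprod : ∀ (n : ℕ) (s : ℝ), ∏ j ∈ Finset.range n, (s + j) = (ascPochhammer ℝ n).eval s := by
    intro n s
    induction n with
    | zero => simp
    | succ k ih => rw [ascPochhammer_succ_eval, Finset.prod_range_succ, ih]
  refine ⟨Real.Gamma (a+b) / (Real.Gamma a * Real.Gamma b), ?_, ?_⟩
  · exact div_ne_zero (Real.Gamma_ne_zero hab) (mul_ne_zero (Real.Gamma_ne_zero ha) (Real.Gamma_ne_zero hb))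
  · rw [← tendsto_add_atTop_iff_nat 1]
    have t := (Real.GammaSeq_tendsto_Gamma (a+b)).div ((Real.GammaSeq_tendsto_Gamma a).mul (Real.GammaSeq_tendsto_Gamma b)) (mul_ne_zero (Real.Gamma_ne_zero ha) (Real.Gamma_ne_zero hb))
    have t3 : Tendsto (fun n : ℕ => 1 + 1 / ((n:ℝ)+1)) atTop (nhds (1+0)) :=
      tendsto_const_nhds.add tendsto_one_div_add_atTop_nhds_zero_nat
    have t4 := t3.mul t
    rw [add_zero, one_mul] at t4
    refine t4.congr' ?_
    filter_upwards [eventually_gt_atTop 0] with n hn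
    have hn' : (0:ℝ) < n := by exact_mod_cast hn
    simp only [Real.GammaSeq, hprod, Pi.div_apply]
    have h1 := hp (n+1) a ha
    have h2 := hp (n+1) b hb
    have h3 := hp (n+1) (a+b) hab
    have h4 : ((n.factorial:ℕ):ℝ) ≠ 0 := by positivity
    have h5 : (n:ℝ)^a ≠ 0 := by positivity
    have h6 : (n:ℝ)^b ≠ 0 := by positivity
    have h7 : (n:ℝ)+1 ≠ 0 := by positivity
    rw [Real.rpow_add hn', Nat.factorial_succ]
    push_cast
    field_simp
    try ring

lemma aux_coef (a b : ℝ)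
    (ha : ∀ n : ℕ, a ≠ -(n : ℝ)) (hb : ∀ n : ℕ, b ≠ -(n : ℝ))
    (hab : ∀ n : ℕ, a + b ≠ -(n : ℝ)) : ∃ L : ℝ, L ≠ 0 ∧ ∃ K : ℝ, ∃ N : ℕ, 1 ≤ N ∧ ∀ n : ℕ, N ≤ n → 
    |((n:ℝ)+1) * ((ascPochhammer ℝ n).eval a * (ascPochhammer ℝ n).eval b /
      ((ascPochhammer ℝ n).eval (a+b) * (n.factorial : ℝ))) - L - L * (1 - a * b) / n| ≤ K / n ^ 2 := by
  obtain ⟨L, hL, hlim⟩ := aux_lim a b ha hb hab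
  refine ⟨L, hL, ?_⟩
  set U : ℕ → ℝ := fun n : ℕ => ((n:ℝ)+1) * ((ascPochhammer ℝ n).eval a * (ascPochhammer ℝ n).eval b /
      ((ascPochhammer ℝ n).eval (a+b) * (n.factorial : ℝ))) with hU
  set E : ℕ → ℝ := fun n : ℕ => ((a*b-1) * n + 2 * (a * b) - (a+b)) / (((n:ℝ)+1)^2 * (n+(a+b))) with hE
  have hp : ∀ (n : ℕ) (s : ℝ), (∀ n : ℕ, s ≠ -(n : ℝ)) → (ascPochhammer ℝ n).eval s ≠ 0 := by
    intro n s hs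
    induction n with
    | zero => simp
    | succ k ih =>
      rw [ascPochhammer_succ_eval]
      refine mul_ne_zero ih ?_
      intro h0; exact hs k (by linarith)
  have hrec : ∀ n, U (n+1) - U n = U n * E n := by
    intro n
    have h3 := hp n (a+b) hab
    have h4 : ((n.factorial:ℕ):ℝ) ≠ 0 := by positivity
    have h7 : (n:ℝ)+1 ≠ 0 := by positivity
    have h8 : (n:ℝ)+(a+b) ≠ 0 := fun h0 => hab n (by linarith)
    have h9 : a+b+(n:ℝ) ≠ 0 := fun h0 => hab n (by linarith)
    simp only [hU, hE, ascPochhammer_succ_eval, Nat.factorial_succ]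
    push_cast
    rw [show (n:ℝ)+(a+b) = a+b+n by ring]
    field_simp
    ring
  obtain ⟨N, hN⟩ := exists_nat_gt (2 * |a+b| + 2)
  have hN2 : 2 ≤ N := by
    have : (2:ℝ) < N := by linarith [abs_nonneg (a+b)]
    exact_mod_cast this.le
  obtain ⟨B, hB⟩ := hlim.abs.bddAbove_range
  have hB' : ∀ n, |U n| ≤ B := fun n => hB ⟨n, rfl⟩
  have hB0 : 0 ≤ B := (abs_nonneg _).trans (hB' 0)
  have hbas : ∀ n : ℕ, N ≤ n → (2:ℝ) ≤ n ∧ (n:ℝ)/2 ≤ n + (a+b) := by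
    intro n hn
    have h1 : (N:ℝ) ≤ n := by exact_mod_cast hn
    have h2 : (2:ℝ) ≤ N := by exact_mod_cast hN2
    exact ⟨by linarith, by linarith [neg_abs_le (a+b)]⟩
  set k1 := 2 * (|a*b-1| + |2*(a*b)-(a+b)|) with hk1
  have hk10 : 0 ≤ k1 := by positivity
  have hE1 : ∀ n : ℕ, N ≤ n → |E n| ≤ k1 / n^2 := by
    intro n hn
    obtain ⟨h1, h2⟩ := hbas n hn
    have hn0 : (0:ℝ) < n := by linarith
    have hs0 : (0:ℝ) < n + (a+b) := by linarith
    rw [hE]; simp only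
    rw [abs_div, abs_of_pos (by positivity : (0:ℝ) < ((n:ℝ)+1)^2 * (n+(a+b)))]
    have hnum : |(a*b-1) * n + 2 * (a * b) - (a+b)| ≤ (|a*b-1| + |2*(a*b)-(a+b)|) * n := by
      have := abs_add_le ((a*b-1)*n) (2*(a*b)-(a+b))
      rw [abs_mul, abs_of_pos hn0, ← add_sub_assoc] at this
      nlinarith [abs_nonneg (2*(a*b)-(a+b))]
    have hden : (n:ℝ)^2 * (n/2) ≤ ((n:ℝ)+1)^2 * (n+(a+b)) := by gcongr; linarith
    calc _ ≤ (|a*b-1| + |2*(a*b)-(a+b)|) * n / ((n:ℝ)^2 * (n/2)) := by gcongr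
      _ = _ := by rw [hk1]; field_simp
  set k2 := 2 * (|2*(a*b)-(a+b) + (1-a*b)*(1+(a+b))| + |(1-a*b)*(a+b)|) with hk2
  have hE2 : ∀ n : ℕ, N ≤ n → |E n + (1-a*b)/(n*(n+1))| ≤ k2 / n^3 := by
    intro n hn
    obtain ⟨h1, h2⟩ := hbas n hn
    have hn0 : (0:ℝ) < n := by linarith
    have hs0 : (0:ℝ) < n + (a+b) := by linarith
    have : E n + (1-a*b)/(n*(n+1)) = ((2*(a*b)-(a+b) + (1-a*b)*(1+(a+b))) * n + (1-a*b)*(a+b)) / (n*((n:ℝ)+1)^2*(n+(a+b))) := by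
      rw [hE]; simp only
      field_simp
      ring
    rw [this, abs_div, abs_of_pos (by positivity : (0:ℝ) < n*((n:ℝ)+1)^2*(n+(a+b)))]
    have hnum : |(2*(a*b)-(a+b) + (1-a*b)*(1+(a+b))) * n + (1-a*b)*(a+b)| ≤ (|2*(a*b)-(a+b) + (1-a*b)*(1+(a+b))| + |(1-a*b)*(a+b)|) * n := by
      have := abs_add_le ((2*(a*b)-(a+b) + (1-a*b)*(1+(a+b))) * n) ((1-a*b)*(a+b))
      rw [abs_mul _ (n:ℝ), abs_of_pos hn0] at this
      nlinarith [abs_nonneg ((1-a*b)*(a+b))]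
    have hden : n * (n:ℝ)^2 * (n/2) ≤ n*((n:ℝ)+1)^2 * (n+(a+b)) := by gcongr; linarith
    calc _ ≤ (|2*(a*b)-(a+b) + (1-a*b)*(1+(a+b))| + |(1-a*b)*(a+b)|) * n / (n * (n:ℝ)^2 * (n/2)) := by gcongr
      _ = _ := by rw [hk2]; field_simp
  have hinv : Tendsto (fun n : ℕ => ((n:ℝ))⁻¹) atTop (nhds 0) := tendsto_inv_atTop_nhds_zero_nat
  have hfirst : ∀ n ≥ N, |U n - L| ≤ (2*B*k1) * (n:ℝ)⁻¹ := by
    apply aux_tail (fun n => U n - L) (fun n => (2*B*k1) * (n:ℝ)⁻¹)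
    · simpa using hlim.sub_const L
    · simpa using hinv.const_mul (2*B*k1)
    · intro n hn
      obtain ⟨h1, h2⟩ := hbas n hn
      have hn0 : (0:ℝ) < n := by linarith
      have e1 : U (n+1) - L - (U n - L) = U n * E n := by rw [← hrec]; ring
      rw [e1, abs_mul]
      calc |U n| * |E n| ≤ B * (k1/n^2) := by gcongr; exacts [hB' n, hE1 n hn]
        _ ≤ 2*B*k1 * (1/(n*(n+1))) := by
          have : 1/(n:ℝ)^2 ≤ 2 * (1/(n*(n+1))) := by
            rw [mul_one_div, div_le_div_iff₀ (by positivity) (by positivity)]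
            nlinarith
          calc _ = B*k1*(1/(n:ℝ)^2) := by ring
            _ ≤ B*k1*(2 * (1/(n*(n+1)))) := by gcongr
            _ = _ := by ring
        _ = _ := by push_cast; field_simp; ring
  set k3 := 2*B*k1*k1 + |L| * k2
  have hk2' : 0 ≤ k2 := by positivity
  have hk3 : 0 ≤ k3 := by positivity
  refine ⟨k3, N, by omega, ?_⟩
  have hfin : ∀ n ≥ N, |U n - L - L*(1-a*b)/n| ≤ k3 * ((n:ℝ)⁻¹)^2 := by
    apply aux_tail (fun n => U n - L - L*(1-a*b)/n) (fun n => k3 * ((n:ℝ)⁻¹)^2)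
    · have := (hlim.sub_const L).sub (hinv.const_mul (L*(1-a*b)))
      simpa [div_eq_mul_inv] using this
    · simpa using (hinv.pow 2).const_mul k3
    · intro n hn
      obtain ⟨h1, h2⟩ := hbas n hn
      have hn0 : (0:ℝ) < n := by linarith
      have e1 : (U (n+1) - L - L*(1-a*b)/((n+1:ℕ):ℝ)) - (U n - L - L*(1-a*b)/n) = (U n - L) * E n + L * (E n + (1-a*b)/(n*(n+1))) := by
        have := hrec n
        have e2 : U (n+1) = U n + U n * E n := by linarith
        rw [e2]; push_cast; field_simp; ring
      rw [e1]
      calc |(U n - L) * E n + L * (E n + (1-a*b)/(n*(n+1)))| ≤ |U n - L| * |E n| + |L| * |E n + (1-a*b)/(n*(n+1))| := by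
            rw [← abs_mul, ← abs_mul]; exact abs_add_le _ _
        _ ≤ ((2*B*k1) * (n:ℝ)⁻¹) * (k1/n^2) + |L| * (k2/n^3) := by
            gcongr
            exacts [hfirst n hn, hE1 n hn, hE2 n hn]
        _ = k3 * (1/(n:ℝ)^3) := by simp only [k3]; field_simp
        _ ≤ k3 * (((n:ℝ)⁻¹)^2 - (((n:ℝ)+1)⁻¹)^2) := by
            gcongr
            have : ((n:ℝ)⁻¹)^2 - (((n:ℝ)+1)⁻¹)^2 - 1/(n:ℝ)^3 = (n^2-n-1)/(n^3*(n+1)^2) := by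
              field_simp; ring
            have h3 : 0 ≤ ((n:ℝ)^2-n-1)/(n^3*(n+1)^2) := by
              apply div_nonneg _ (by positivity)
              nlinarith
            linarith
        _ = _ := by push_cast; ring
  intro n hn
  have h9 := hfin n hn
  rw [inv_pow, ← div_eq_mul_inv] at h9
  exact h9

lemma aux_pow (z : ℂ) (hz : ‖z‖ ≤ 1) (n : ℕ) : ‖z^n - 1‖ ≤ n * ‖1 - z‖ := by
  induction n with
  | zero => simp
  | succ k ih =>
    have e : z^(k+1) - 1 = z * (z^k - 1) - (1 - z) := by ring
    rw [e]
    calc _ ≤ ‖z * (z^k-1)‖ + ‖1 - z‖ := norm_sub_le _ _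
      _ ≤ 1 * (k * ‖1-z‖) + ‖1-z‖ := by rw [norm_mul]; gcongr
      _ = _ := by push_cast; ring

lemma aux_series (a b : ℝ)
    (ha : ∀ n : ℕ, a ≠ -(n : ℝ)) (hb : ∀ n : ℕ, b ≠ -(n : ℝ))
    (hab : ∀ n : ℕ, a + b ≠ -(n : ℝ)) : ∃ L : ℝ, L ≠ 0 ∧ ∃ C : ℝ, 0 ≤ C ∧ ∃ h : ℂ → ℂ,
    ∀ z ∈ ball (0:ℂ) 1, ‖h z‖ ≤ C ∧ |(h z).im| ≤ C * ‖1 - z‖ ∧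
      z * hyperF a b (a+b) z = L * (-log (1 - z) + ((1 - a * b : ℝ) : ℂ) * ((1 - z) * log (1 - z)) + h z) := by
  obtain ⟨L, hL, K, N, hN, hK⟩ := aux_coef a b ha hb hab
  refine ⟨L, hL, ?_⟩
  set γ := 1 - a * b with hγ
  set A : ℕ → ℝ := fun n => ((ascPochhammer ℝ n).eval a * (ascPochhammer ℝ n).eval b /
      ((ascPochhammer ℝ n).eval (a+b) * (n.factorial : ℝ))) with hA
  set d : ℕ → ℝ := fun n => A n / L - (1 - γ)/((n:ℝ)+1) - γ / n with hd
  have hD : Summable (fun n : ℕ => ((n:ℝ)+1) * |d n|) := by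
    have hs : Summable (fun n : ℕ => K / |L| * (1/(n:ℝ)^2)) :=
      (Real.summable_one_div_nat_pow.2 (by norm_num)).mul_left _
    refine Summable.of_norm_bounded_eventually_nat hs ?_
    filter_upwards [eventually_ge_atTop N] with n hn
    have hn0 : (0:ℝ) < n := by exact_mod_cast (by omega : 0 < n)
    have h1 := hK n hn
    have e : ((n:ℝ)+1) * d n = (((n:ℝ)+1) * A n - L - L * γ / n) / L := by
      simp only [hd]; field_simp; ring
    have e2 : ((n:ℝ)+1) * |d n| = |((n:ℝ)+1) * d n| := by
      rw [abs_mul, abs_of_pos (by positivity : (0:ℝ) < (n:ℝ)+1)]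
    rw [e2, Real.norm_eq_abs, abs_abs, e, abs_div]
    calc _ ≤ (K / n^2) / |L| := by gcongr
      _ = _ := by ring
  have hd1 : Summable (fun n : ℕ => |d n|) := by
    refine Summable.of_nonneg_of_le (fun n => abs_nonneg _) (fun n => ?_) hD
    have : (0:ℝ) ≤ n := by positivity
    nlinarith [abs_nonneg (d n)]
  refine ⟨∑' n : ℕ, ((n:ℝ)+1) * |d n|, tsum_nonneg (fun n => by positivity), 
    fun z => ∑' n : ℕ, (d n : ℂ) * z^(n+1), ?_⟩
  intro z hz
  have hz1 : ‖z‖ < 1 := by simpa using hz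
  have hb1 : ∀ n : ℕ, ‖(d n : ℂ) * z^(n+1)‖ ≤ |d n| := by
    intro n
    rw [norm_mul, norm_pow, Complex.norm_real, Real.norm_eq_abs]
    exact mul_le_of_le_one_right (abs_nonneg _) (pow_le_one₀ (norm_nonneg _) hz1.le)
  have hsum : Summable (fun n : ℕ => (d n : ℂ) * z^(n+1)) := Summable.of_norm_bounded hd1 hb1
  have hsum1 : Summable (fun n : ℕ => (d n : ℂ)) := by
    refine Summable.of_norm_bounded hd1 (fun n => ?_)
    rw [Complex.norm_real, Real.norm_eq_abs]
  refine ⟨?_, ?_, ?_⟩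
  · refine tsum_of_norm_bounded hD.hasSum (fun n => (hb1 n).trans ?_)
    have : (0:ℝ) ≤ n := by positivity
    nlinarith [abs_nonneg (d n)]
  · have e1 : (∑' n : ℕ, (d n : ℂ)).im = 0 := by
      rw [← Complex.ofReal_tsum, Complex.ofReal_im]
    have e2 : (∑' n : ℕ, (d n : ℂ) * z^(n+1)).im = (∑' n : ℕ, (d n : ℂ) * (z^(n+1) - 1)).im := by
      have : (∑' n : ℕ, (d n : ℂ) * (z^(n+1) - 1)) = (∑' n : ℕ, (d n : ℂ) * z^(n+1)) - ∑' n : ℕ, (d n : ℂ) := by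
        rw [← hsum.tsum_sub hsum1]
        congr 1; ext n; ring
      rw [this, Complex.sub_im, e1, sub_zero]
    simp only
    rw [e2]
    refine (Complex.abs_im_le_norm _).trans ?_
    refine tsum_of_norm_bounded (hD.hasSum.mul_right _) (fun n => ?_)
    rw [norm_mul, Complex.norm_real, Real.norm_eq_abs]
    have := aux_pow z hz1.le (n+1)
    push_cast at this
    calc _ ≤ |d n| * (((n:ℝ)+1) * ‖1 - z‖) := by gcongr
      _ = _ := by ring
  · have hl := Complex.hasSum_taylorSeries_neg_log hz1
    have hl2 : HasSum (fun n : ℕ => z^(n+1)/((n:ℂ)+1)) (-log (1-z)) := by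
      have := (hasSum_nat_add_iff' (f := fun n : ℕ => z^n/(n:ℂ)) 1).2 hl
      simpa using this
    have h3 := (((hl2.mul_left ((1-γ : ℝ):ℂ)).add ((hl.mul_left z).mul_left (γ:ℂ))).add hsum.hasSum).mul_left (L:ℂ)
    have h4 : z * hyperF a b (a+b) z = ∑' n : ℕ, z * ((A n : ℂ) * z^n) := by
      rw [tsum_mul_left]; rfl
    have hLc : (L:ℂ) ≠ 0 := by exact_mod_cast hL
    have h5 : (fun n : ℕ => z * ((A n : ℂ) * z^n)) = fun n : ℕ => (L:ℂ) * (((1-γ : ℝ):ℂ) * (z^(n+1)/((n:ℂ)+1)) + (γ:ℂ) * (z * (z^n/n)) + (d n : ℂ) * z^(n+1)) := by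
      ext n
      have e : A n = L * (d n + (1-γ)/((n:ℝ)+1) + γ / n) := by
        simp only [hd]; field_simp; ring
      rw [e]; push_cast; ring
    rw [h4, h5, h3.tsum_eq]
    push_cast; ring

lemma aux_core (γ : ℝ) (hγ : 0 < γ) (C : ℝ) (hC : 0 ≤ C) (h : ℂ → ℂ)
    (hb : ∀ z ∈ ball (0:ℂ) 1, ‖h z‖ ≤ C) (hi : ∀ z ∈ ball (0:ℂ) 1, |(h z).im| ≤ C * ‖1 - z‖) :
    ¬ Convex ℝ ((fun z : ℂ => -log (1 - z) + (γ : ℂ) * ((1 - z) * log (1 - z)) + h z) '' ball (0:ℂ) 1) := by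
  intro hconv
  set g : ℂ → ℂ := fun z : ℂ => -log (1 - z) + (γ : ℂ) * ((1 - z) * log (1 - z)) + h z with hg
  have hpi := Real.pi_pos
  have hpi4 := Real.pi_le_four
  have gim : ∀ z, (g z).im = -arg (1-z) + γ * ((1-z).re * arg (1-z) + (1-z).im * Real.log ‖1-z‖) + (h z).im := by
    intro z
    simp [hg, Complex.log_im, Complex.log_re]
  have hball : ∀ z ∈ ball (0:ℂ) 1, 0 < ‖1-z‖ ∧ ‖1-z‖ < 2 ∧ |arg (1-z)| ≤ 2 ∧ -arg (1-z) ≤ Real.pi/2 := by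
    intro z hz
    have hz1 : ‖z‖ < 1 := by simpa using hz
    have hre : 0 < (1-z).re := by
      have := Complex.re_le_norm z
      simp; linarith
    have ha := Complex.abs_arg_le_pi_div_two_iff.2 hre.le
    refine ⟨hre.trans_le (Complex.re_le_norm _), ?_, by linarith, ?_⟩
    · have := norm_sub_le (1:ℂ) z
      rw [norm_one] at this; linarith
    · linarith [(abs_le.1 ha).1]
  have hlog : ∀ z ∈ ball (0:ℂ) 1, ‖log (1-z)‖ ≤ |Real.log ‖1-z‖| + 2 := by
    intro z hz
    have := Complex.norm_le_abs_re_add_abs_im (log (1-z))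
    rw [Complex.log_re, Complex.log_im] at this
    linarith [(hball z hz).2.2.1]
  obtain ⟨p, hp, hpim⟩ : ∃ p ∈ g '' ball (0:ℂ) 1, Real.pi / 2 < p.im := by
    set T := (3 + 2*γ + 2*C)/γ with hT
    have hT0 : 0 < T := by positivity
    have hγT : γ * T = 3 + 2*γ+2*C := by rw [hT]; field_simp
    set θ := Real.exp (-T) / 2 with hθ
    have hθ0 : 0 < θ := by positivity
    have hθ1 : θ < 1 := by
      have : Real.exp (-T) < 1 := by rw [Real.exp_lt_one_iff]; linarith
      linarith
    set w : ℂ := ⟨θ^2, -θ⟩ with hw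
    have hwn : ‖w‖^2 = θ^4 + θ^2 := by
      rw [← Complex.normSq_eq_norm_sq, Complex.normSq_apply]; simp [hw]; ring
    have hz : (1 - w) ∈ ball (0:ℂ) 1 := by
      rw [mem_ball_zero_iff]
      have : ‖1-w‖^2 = (1-θ^2)^2 + θ^2 := by
        rw [← Complex.normSq_eq_norm_sq, Complex.normSq_apply]; simp [hw]; ring
      have h2 : ‖1-w‖^2 < 1 := by
        rw [this]; nlinarith [mul_pos hθ0 hθ0, mul_pos (mul_pos hθ0 hθ0) (sub_pos.2 hθ1)]
      nlinarith [norm_nonneg (1-w)]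
    refine ⟨g (1-w), ⟨_, hz, rfl⟩, ?_⟩
    obtain ⟨b1, b2, b3, b4⟩ := hball _ hz
    have b5 := hi _ hz
    rw [gim]
    rw [sub_sub_cancel] at *
    have hw2 : ‖w‖ ≤ 2*θ := by
      apply le_of_sq_le_sq _ (by positivity)
      rw [hwn]; nlinarith [mul_pos hθ0 hθ0, mul_pos (mul_pos hθ0 hθ0) (sub_pos.2 hθ1)]
    have hw3 : θ ≤ ‖w‖ := by
      apply le_of_sq_le_sq _ (by positivity)
      rw [hwn]; nlinarith [pow_pos hθ0 4]
    have hlg : Real.log ‖w‖ ≤ -T := by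
      have : Real.log ‖w‖ ≤ Real.log (2*θ) := Real.log_le_log b1 hw2
      rwa [hθ, mul_div_cancel₀ _ (by norm_num : (2:ℝ) ≠ 0), Real.log_exp] at this
    have hwim : w.im = -θ := rfl
    have hwre : w.re = θ^2 := rfl
    have harg0 : arg w < 0 := by rw [Complex.arg_neg_iff, hwim]; linarith
    have hw0 : w ≠ 0 := norm_pos_iff.1 b1
    have hcos : Real.cos (arg w) ≤ θ := by
      rw [Complex.cos_arg hw0, hwre, div_le_iff₀ b1]; nlinarith
    have hx : arg w + Real.pi/2 ≤ 2 * θ := by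
      have := Real.mul_le_sin (x := arg w + Real.pi/2) (by linarith) (by linarith)
      rw [Real.sin_add_pi_div_two] at this
      have h2 : 2 / Real.pi * (arg w + Real.pi/2) ≤ θ := this.trans hcos
      have h3 : arg w + Real.pi/2 = Real.pi/2 * (2 / Real.pi * (arg w + Real.pi/2)) := by field_simp
      rw [h3]; nlinarith
    rw [hwre, hwim]
    have c1 : -(2*θ) ≤ θ^2 * arg w := by
      have := (abs_le.1 b3).1
      nlinarith [mul_pos hθ0 hθ0]
    have c2 : θ * T ≤ -θ * Real.log ‖w‖ := by nlinarith
    have c3 : γ * (-(2*θ) + θ * T) ≤ γ * (θ^2 * arg w + -θ * Real.log ‖w‖) := by gcongr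
    have c4 : C * ‖w‖ ≤ C * (2*θ) := by gcongr
    have c5 := (abs_le.1 b5).1
    have c6 : γ * (-(2*θ) + θ * T) = θ * (3 + 2*C) := by
      have : γ * (-(2*θ) + θ * T) = θ * (γ * T - 2 * γ) := by ring
      rw [this, hγT]; ring
    nlinarith
  set δ := (p.im - Real.pi/2)/2 with hδ
  have hδ0 : 0 < δ := by rw [hδ]; linarith
  obtain ⟨ρ, hρ, hnear⟩ : ∃ ρ > 0, ∀ z ∈ ball (0:ℂ) 1, ‖1-z‖ < ρ → (g z).im < Real.pi/2 + δ := by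
    have hcont : Continuous (fun r : ℝ => γ * (2 * |r| + |r * Real.log r|) + C * r) := by
      have := Real.continuous_mul_log
      fun_prop
    obtain ⟨ρ, hρ, hh⟩ := Metric.continuous_iff.1 hcont 0 δ hδ0
    refine ⟨ρ, hρ, fun z hz hzr => ?_⟩
    have h1 := hh ‖1-z‖ (by simpa using hzr)
    obtain ⟨b1, b2, b3, b4⟩ := hball _ hz
    have b5 := hi _ hz
    simp only [Real.dist_eq, abs_zero, mul_zero, Real.log_zero, add_zero, sub_zero, abs_norm] at h1
    have h2 := (abs_lt.1 h1).2
    rw [gim]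
    have c1 : (1-z).re * arg (1-z) ≤ 2 * ‖1-z‖ := by
      refine (le_abs_self _).trans ?_
      rw [abs_mul, mul_comm]
      gcongr
      exact Complex.abs_re_le_norm _
    have c2 : (1-z).im * Real.log ‖1-z‖ ≤ |‖1-z‖ * Real.log ‖1-z‖| := by
      refine (le_abs_self _).trans ?_
      rw [abs_mul, abs_mul, abs_norm]
      gcongr
      exact Complex.abs_im_le_norm _
    have c3 : γ * ((1-z).re * arg (1-z) + (1-z).im * Real.log ‖1-z‖) ≤ γ * (2 * ‖1-z‖ + |‖1-z‖ * Real.log ‖1-z‖|) := by gcongr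
    linarith [(abs_le.1 b5).2]
  obtain ⟨M, hM0, hfar⟩ : ∃ M, 0 ≤ M ∧ ∀ z ∈ ball (0:ℂ) 1, ρ ≤ ‖1-z‖ → ‖g z‖ ≤ M := by
    refine ⟨(1 + γ * 2) * (|Real.log ρ| + Real.log 2 + 2) + C, by positivity, fun z hz hzr => ?_⟩
    obtain ⟨b1, b2, b3, b4⟩ := hball _ hz
    have l1 : |Real.log ‖1-z‖| ≤ |Real.log ρ| + Real.log 2 := by
      have u1 := Real.log_le_log hρ hzr
      have u2 := Real.log_le_log b1 b2.le
      have u3 := Real.log_nonneg (by norm_num : (1:ℝ) ≤ 2)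
      rw [abs_le]; constructor <;> linarith [neg_abs_le (Real.log ρ), abs_nonneg (Real.log ρ)]
    have l2 : ‖log (1-z)‖ ≤ |Real.log ρ| + Real.log 2 + 2 := by linarith [hlog z hz]
    calc ‖g z‖ ≤ ‖log (1-z)‖ + ‖(γ : ℂ) * ((1 - z) * log (1 - z))‖ + ‖h z‖ := by
          refine (norm_add_le _ _).trans ?_
          gcongr
          refine (norm_add_le _ _).trans ?_
          rw [norm_neg]
      _ = ‖log (1-z)‖ + γ * (‖1-z‖ * ‖log (1-z)‖) + ‖h z‖ := by
          rw [norm_mul, norm_mul, Complex.norm_real, Real.norm_eq_abs, abs_of_pos hγ]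
      _ ≤ (|Real.log ρ| + Real.log 2 + 2) + γ * (2 * (|Real.log ρ| + Real.log 2 + 2)) + C := by
          gcongr
          exact hb z hz
      _ = _ := by ring
  have hpim0 : 0 < p.im := by linarith
  set t := δ / (p.im + C + δ) with ht
  have ht0 : 0 < t := by positivity
  have ht1 : t ≤ 1 := by rw [ht, div_le_one (by positivity)]; linarith
  have htm : t * (p.im + C + δ) = δ := by rw [ht]; field_simp
  obtain ⟨q, hq, hqre, hqim⟩ : ∃ q ∈ g '' ball (0:ℂ) 1, (M + ‖p‖ + 1)/t ≤ q.re ∧ -C ≤ q.im := by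
    set R := (M + ‖p‖ + 1)/t with hR
    have hR0 : 0 < R := by positivity
    set ε := Real.exp (-(R + γ + C)) with hε
    have hε0 : 0 < ε := Real.exp_pos _
    have hε1 : ε < 1 := by rw [hε, Real.exp_lt_one_iff]; linarith
    have hz : ((1 - ε : ℝ) : ℂ) ∈ ball (0:ℂ) 1 := by
      rw [mem_ball_zero_iff, Complex.norm_real, Real.norm_eq_abs, abs_lt]; constructor <;> linarith
    have e1 : (1:ℂ) - ((1 - ε : ℝ) : ℂ) = (ε : ℂ) := by push_cast; ring
    refine ⟨_, ⟨_, hz, rfl⟩, ?_, ?_⟩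
    · have e2 : (g ((1 - ε : ℝ) : ℂ)).re = -Real.log ε + γ * (ε * Real.log ε) + (h ((1 - ε : ℝ) : ℂ)).re := by
        simp only [hg]; rw [e1, ← Complex.ofReal_log hε0.le]; simp
      rw [e2]
      have e3 := hb _ hz
      have e4 := Complex.abs_re_le_norm (h ((1 - ε : ℝ) : ℂ))
      have e5 := (abs_le.1 (e4.trans e3)).1
      have e6 := (abs_lt.1 (Real.abs_log_mul_self_lt ε hε0 hε1.le)).1
      have e7 : Real.log ε = -(R + γ + C) := by rw [hε, Real.log_exp]
      have e8 : γ * (-1) ≤ γ * (ε * Real.log ε) := by gcongr; linarith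
      linarith
    · have e2 : (g ((1 - ε : ℝ) : ℂ)).im = (h ((1 - ε : ℝ) : ℂ)).im := by
        simp only [hg]; rw [e1, ← Complex.ofReal_log hε0.le]; simp
      rw [e2]
      have e3 := hb _ hz
      have e4 := Complex.abs_im_le_norm (h ((1 - ε : ℝ) : ℂ))
      exact (abs_le.1 (e4.trans e3)).1
  have hmem := hconv hp hq (sub_nonneg.2 ht1) ht0.le (by ring : (1 - t) + t = 1)
  obtain ⟨z, hz, hzeq⟩ := hmem
  have him : (g z).im = (1-t) * p.im + t * q.im := by rw [hzeq]; simp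
  have hre : (g z).re = (1-t) * p.re + t * q.re := by rw [hzeq]; simp
  rcases lt_or_ge ‖1-z‖ ρ with hlt | hge
  · have := hnear z hz hlt
    rw [him] at this
    have : p.im = Real.pi/2 + 2*δ := by rw [hδ]; ring
    nlinarith
  · have h1 := hfar z hz hge
    have h2 := (Complex.re_le_norm (g z)).trans h1
    rw [hre] at h2
    rw [div_le_iff₀ ht0] at hqre
    have h3 := (abs_le.1 (Complex.abs_re_le_norm p)).1
    nlinarith [norm_nonneg p]

theorem stmt_18 (a b : ℝ)
    (ha : ∀ n : ℕ, a ≠ -(n : ℝ)) (hb : ∀ n : ℕ, b ≠ -(n : ℝ))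
    (hab : ∀ n : ℕ, a + b ≠ -(n : ℝ)) (h : a * b < 1) :
    ¬ (Set.InjOn (fun z : ℂ => z * hyperF a b (a + b) z) (Metric.ball (0 : ℂ) 1) ∧
       Convex ℝ ((fun z : ℂ => z * hyperF a b (a + b) z) '' Metric.ball (0 : ℂ) 1)) := by
  rintro ⟨-, hconv⟩
  obtain ⟨L, hL, C, hC, H, hH⟩ := aux_series a b ha hb hab
  refine aux_core (1 - a*b) (by linarith) C hC H (fun z hz => (hH z hz).1)
    (fun z hz => (hH z hz).2.1) ?_
  have h1 := hconv.smul (L⁻¹)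
  rw [← Set.image_smul, Set.image_image] at h1
  refine (Set.image_congr ?_) ▸ h1
  intro z hz
  have hLc : (L:ℂ) ≠ 0 := by exact_mod_cast hL
  rw [(hH z hz).2.2, Complex.real_smul, Complex.ofReal_inv, inv_mul_cancel_left₀ hLc]
end

section
/- Let b and c be real constants with 0 < b ≤ c, and assume that either (1) b ≤ 4 and c ≥ 2, or (2) 1 ≤ c < min{2, 1+b} and c ≥ 3 − b. Then the function f(z) = z F(1,b;c;z) is injective on 𝔻 and its image f(𝔻) is a convex subset of ℂ. -/
open Complex Filter MeasureTheory Metric Set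

open Topology in
lemma aux_strict {f : ℂ → ℂ} (hf : DifferentiableOn ℂ f (ball 0 1)) {z : ℂ} (hz : z ∈ ball (0:ℂ) 1) :
    HasStrictDerivAt f (deriv f z) z :=
  ((hf.analyticOnNhd isOpen_ball) z hz).hasStrictDerivAt

open Topology in
lemma aux_inv {f : ℂ → ℂ} (hf : DifferentiableOn ℂ f (ball 0 1)) (inj : InjOn f (ball 0 1))
    (h' : ∀ z ∈ ball (0:ℂ) 1, deriv f z ≠ 0) :
    ∃ g : ℂ → ℂ, (∀ z ∈ ball (0:ℂ) 1, g (f z) = z) ∧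
      ∀ z ∈ ball (0:ℂ) 1, HasDerivAt g (deriv f z)⁻¹ (f z) := by
  refine ⟨Function.invFunOn f (ball 0 1), fun z hz => inj.leftInvOn_invFunOn hz, fun z hz => ?_⟩
  have hl : ∀ z ∈ ball (0:ℂ) 1, Function.invFunOn f (ball 0 1) (f z) = z :=
    fun z hz => inj.leftInvOn_invFunOn hz
  set g := Function.invFunOn f (ball 0 1)
  have hm := (aux_strict hf hz).map_nhds_eq (h' z hz)
  have hev : ∀ᶠ x in 𝓝 z, g (f x) = x := by
    filter_upwards [isOpen_ball.mem_nhds hz] with x hx using hl x hx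
  have hc : ContinuousAt g (f z) := by
    unfold ContinuousAt
    rw [← hm, tendsto_map'_iff, hl z hz]
    exact tendsto_id.congr' (by filter_upwards [hev] with x hx using hx.symm)
  refine HasDerivAt.of_local_left_inverse (f := f) hc ?_ (h' z hz) ?_
  · rw [hl z hz]; exact (aux_strict hf hz).hasDerivAt
  · rw [← hm, eventually_map]
    filter_upwards [hev] with x hx
    rw [hx]

open Topology in
lemma aux_seg {f : ℂ → ℂ} (hf : DifferentiableOn ℂ f (ball 0 1)) (inj : InjOn f (ball 0 1))
    (h' : ∀ z ∈ ball (0:ℂ) 1, deriv f z ≠ 0)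
    (hp : ∀ z ∈ ball (0:ℂ) 1, 0 < (1 + z * deriv (deriv f) z / deriv f z).re)
    {ρ : ℝ} (hρ1 : ρ < 1) {a b : ℂ} (ha : a ∈ ball (0:ℂ) ρ) (hb : b ∈ ball (0:ℂ) ρ)
    (hseg : ∀ t ∈ Icc (0:ℝ) 1, f a + (t:ℂ) * (f b - f a) ∈ f '' closedBall 0 ρ) :
    ∀ t ∈ Icc (0:ℝ) 1, f a + (t:ℂ) * (f b - f a) ∈ f '' ball 0 ρ := by
  obtain ⟨g, hg, hgd⟩ := aux_inv hf inj h'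
  have hcb : closedBall (0:ℂ) ρ ⊆ ball 0 1 := closedBall_subset_ball hρ1
  have hbb : ball (0:ℂ) ρ ⊆ ball 0 1 := ball_subset_ball hρ1.le
  set v := f b - f a with hv
  set γ : ℝ → ℂ := fun t => g (f a + (t:ℂ) * v) with hγ
  by_cases hv0 : v = 0
  · intro t ht
    rw [hv0, mul_zero, add_zero]
    exact ⟨a, ha, rfl⟩
  have hγf : ∀ t ∈ Icc (0:ℝ) 1, f (γ t) = f a + (t:ℂ) * v ∧ γ t ∈ closedBall (0:ℂ) ρ := by
    intro t ht
    obtain ⟨x, hx, hxe⟩ := hseg t ht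
    have : γ t = x := by simp only [hγ]; rw [← hxe, hg x (hcb hx)]
    rw [this]; exact ⟨hxe, hx⟩
  have hγd : ∀ t ∈ Icc (0:ℝ) 1, HasDerivAt γ (v / deriv f (γ t)) t := by
    intro t ht
    obtain ⟨h1, h2⟩ := hγf t ht
    have h3 := hgd (γ t) (hcb h2)
    rw [h1] at h3
    have h4 : HasDerivAt (fun t : ℝ => f a + (t:ℂ) * v) v t := by
      have := ((hasDerivAt_id t).ofReal_comp.mul_const v).const_add (f a)
      simpa using this
    have := HasDerivAt.comp t h3 h4
    rw [div_eq_inv_mul]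
    exact this
  have h0 : γ 0 = a := by simp [hγ, hg a (hbb ha)]
  have h1 : γ 1 = b := by simp [hγ, hv, hg b (hbb hb)]
  have hcont : ContinuousOn (fun t => ‖γ t‖ ^ 2) (Icc 0 1) := fun t ht =>
    ((hγd t ht).continuousAt.norm.pow 2).continuousWithinAt
  obtain ⟨t0, ht0, hmax⟩ := isCompact_Icc.exists_isMaxOn (nonempty_Icc.2 zero_le_one) hcont
  have hρ0 : 0 < ρ := pos_of_mem_ball ha
  have hlt : ‖γ t0‖ < ρ := by
    by_contra hge
    push Not at hge
    have hz : γ t0 ∈ ball (0:ℂ) 1 := hcb (hγf t0 ht0).2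
    have hne0 : t0 ≠ 0 := by
      rintro rfl
      rw [h0] at hge; simp at ha; linarith
    have hne1 : t0 ≠ 1 := by
      rintro rfl
      rw [h1] at hge; simp at hb; linarith
    have ht0' : t0 ∈ Ioo (0:ℝ) 1 := ⟨lt_of_le_of_ne ht0.1 (Ne.symm hne0), lt_of_le_of_ne ht0.2 hne1⟩
    have hnh : Icc (0:ℝ) 1 ∈ 𝓝 t0 := Icc_mem_nhds ht0'.1 ht0'.2
    have hlm : IsLocalMax (fun t => ‖γ t‖ ^ 2) t0 := hmax.isLocalMax hnh
    -- first derivative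
    have hd1 : ∀ t ∈ Icc (0:ℝ) 1, HasDerivAt (fun t => ‖γ t‖ ^ 2)
        (2 * ((starRingEnd ℂ) (γ t) * (v / deriv f (γ t))).re) t := by
      intro t ht
      have := (hγd t ht).norm_sq
      convert this using 2
      rw [Complex.inner, mul_comm]
    have hfd : HasDerivAt (deriv f) (deriv (deriv f) (γ t0)) (γ t0) :=
      ((hf.analyticOnNhd isOpen_ball) _ hz).deriv.differentiableAt.hasDerivAt
    have hd2 : HasDerivAt (fun t : ℝ => v / deriv f (γ t))
       (- v * (deriv (deriv f) (γ t0) * (v / deriv f (γ t0))) / deriv f (γ t0) ^ 2) t0 := by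
      have h5 : HasDerivAt (fun t => deriv f (γ t)) (deriv (deriv f) (γ t0) * (v / deriv f (γ t0))) t0 :=
        HasDerivAt.comp t0 hfd (hγd t0 ht0)
      have := (hasDerivAt_const t0 v).fun_div h5 (h' _ hz)
      exact this.congr_deriv (by ring)
    have hd3 : HasDerivAt (fun t : ℝ => (starRingEnd ℂ) (γ t)) ((starRingEnd ℂ) (v / deriv f (γ t0))) t0 := by
      simpa using (hγd t0 ht0).star
    have hd4 := (hd3.mul hd2)
    have hd5 : HasDerivAt (fun t : ℝ => 2 * ((starRingEnd ℂ) (γ t) * (v / deriv f (γ t))).re)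
       (2 * ((starRingEnd ℂ) (v / deriv f (γ t0)) * (v / deriv f (γ t0)) +
        (starRingEnd ℂ) (γ t0) * (- v * (deriv (deriv f) (γ t0) * (v / deriv f (γ t0))) / deriv f (γ t0) ^ 2)).re) t0 :=
      ((Complex.reCLM.hasFDerivAt.comp_hasDerivAt t0 hd4).const_mul 2)
    have hev : deriv (fun t => ‖γ t‖ ^ 2) =ᶠ[𝓝 t0]
        fun t : ℝ => 2 * ((starRingEnd ℂ) (γ t) * (v / deriv f (γ t))).re := by
      filter_upwards [hnh] with t ht using (hd1 t ht).deriv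
    have hcrit : ((starRingEnd ℂ) (γ t0) * (v / deriv f (γ t0))).re = 0 := by
      have := hlm.hasDerivAt_eq_zero (hd1 t0 ht0)
      linarith
    have hdd : deriv (deriv (fun t => ‖γ t‖ ^ 2)) t0 > 0 := by
      rw [hev.deriv_eq, hd5.deriv]
      have hpz := hp _ hz
      have hQ := h' _ hz
      generalize deriv (deriv f) (γ t0) = E at *
      generalize deriv f (γ t0) = Q at *
      have hn0 : γ t0 ≠ 0 := by
        intro h; rw [h, norm_zero] at hge; linarith
      generalize γ t0 = z at *
      set q := v / Q with hq
      have hq0 : q ≠ 0 := div_ne_zero hv0 hQ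
      have e1 : - v * (E * q) / Q ^ 2 = - q ^ 2 * (E / Q) := by
        rw [hq]; field_simp
      rw [e1]
      rw [mul_div_assoc] at hpz
      generalize E / Q = P at *
      have hm : 0 < normSq z := normSq_pos.2 hn0
      have hm2 : 0 < normSq q := normSq_pos.2 hq0
      simp only [normSq_apply, add_re, mul_re, mul_im, conj_re, conj_im, neg_re, neg_im, one_re, pow_two] at *
      -- x q1 + y q2 = 0
      have key : (z.re*z.re+z.im*z.im) * (q.re * q.re - -q.im * q.im +
        (z.re * (-(q.re * q.re - q.im * q.im) * P.re - -(q.re * q.im + q.im * q.re) * P.im) -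
          -z.im * (-(q.re * q.re - q.im * q.im) * P.im + -(q.re * q.im + q.im * q.re) * P.re)))
          = (z.re*z.re+z.im*z.im) * ((q.re*q.re+q.im*q.im) * (1 + (z.re * P.re - z.im * P.im))) := by
        linear_combination (-2 * (z.re*z.re+z.im*z.im) * (q.re * P.re - q.im * P.im)) * hcrit
      have := mul_pos hm (mul_pos hm2 hpz)
      rw [← key] at this
      have := pos_of_mul_pos_right this hm.le
      linarith
    have hlmin := isLocalMin_of_deriv_deriv_pos hdd (by rw [(hd1 t0 ht0).deriv, hcrit, mul_zero])
      (hd1 t0 ht0).continuousAt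
    have hconst : (fun t => ‖γ t‖ ^ 2) =ᶠ[𝓝 t0] fun _ => ‖γ t0‖ ^ 2 := by
      filter_upwards [hlm, hlmin] with t h1 h2 using le_antisymm h1 h2
    have : deriv (deriv (fun t => ‖γ t‖ ^ 2)) t0 = 0 := by
      rw [hconst.deriv.deriv_eq]; simp
    linarith
  intro t ht
  refine ⟨γ t, ?_, (hγf t ht).1⟩
  have := hmax ht
  simp only [mem_ofPred_eq] at this
  rw [mem_ball_zero_iff]
  exact lt_of_le_of_lt (le_of_sq_le_sq this (norm_nonneg _)) hlt

open Topology in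
lemma aux_convex {f : ℂ → ℂ} (hf : DifferentiableOn ℂ f (ball 0 1)) (inj : InjOn f (ball 0 1))
    (h' : ∀ z ∈ ball (0:ℂ) 1, deriv f z ≠ 0)
    (hp : ∀ z ∈ ball (0:ℂ) 1, 0 < (1 + z * deriv (deriv f) z / deriv f z).re) :
    Convex ℝ (f '' ball 0 1) := by
  have main : ∀ x ∈ ball (0:ℂ) 1, ∀ y ∈ ball (0:ℂ) 1, ∀ t ∈ Icc (0:ℝ) 1,
      f x + (t:ℂ) * (f y - f x) ∈ f '' ball 0 1 := by
    intro x hx y hy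
    obtain ⟨ρ, hρ, hρ1⟩ : ∃ ρ, max ‖x‖ ‖y‖ < ρ ∧ ρ < 1 :=
      exists_between (max_lt (by simpa using hx) (by simpa using hy))
    have hx' : ‖x‖ < ρ := lt_of_le_of_lt (le_max_left _ _) hρ
    have hy' : ‖y‖ < ρ := lt_of_le_of_lt (le_max_right _ _) hρ
    have hcb : closedBall (0:ℂ) ρ ⊆ ball 0 1 := closedBall_subset_ball hρ1
    have hbb : ball (0:ℂ) ρ ⊆ ball 0 1 := ball_subset_ball hρ1.le
    have hsc : ∀ u : ℂ, ‖u‖ < ρ → ∀ s ∈ Icc (0:ℝ) 1, (s:ℂ) * u ∈ ball (0:ℂ) ρ := by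
      intro u hu s hs
      rw [mem_ball_zero_iff, norm_mul, Complex.norm_real, Real.norm_eq_abs, abs_of_nonneg hs.1]
      nlinarith [hs.2, hs.1, norm_nonneg u]
    have hopen : IsOpen (f '' ball 0 ρ) := by
      rw [isOpen_iff_mem_nhds]
      rintro _ ⟨z, hz, rfl⟩
      rw [← (aux_strict hf (hbb hz)).map_nhds_eq (h' z (hbb hz))]
      exact image_mem_map (isOpen_ball.mem_nhds hz)
    have hclosed : IsClosed (f '' closedBall 0 ρ) :=
      ((isCompact_closedBall (0:ℂ) ρ).image_of_continuousOn (hf.continuousOn.mono hcb)).isClosed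
    set T : Set ℝ := {s | ∀ t ∈ Icc (0:ℝ) 1,
      f (s * x) + (t:ℂ) * (f (s * y) - f (s * x)) ∈ f '' ball 0 ρ} with hT
    have hcontf : ∀ u : ℂ, ‖u‖ < ρ → ∀ s ∈ Icc (0:ℝ) 1, ContinuousAt (fun s : ℝ => f (s * u)) s := by
      intro u hu s hs
      have h1 : ContinuousAt f (s * u) := hf.continuousOn.continuousAt
        (isOpen_ball.mem_nhds (hbb (hsc u hu s hs)))
      exact ContinuousAt.comp (f := fun s : ℝ => (s:ℂ) * u) h1 (by fun_prop)
    have hTc : IsClosed (T ∩ Icc 0 1) := by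
      have : T ∩ Icc 0 1 = Icc 0 1 ∩ ⋂ t ∈ Icc (0:ℝ) 1, (Icc (0:ℝ) 1 ∩ (fun s : ℝ =>
          f (s * x) + (t:ℂ) * (f (s * y) - f (s * x))) ⁻¹' (f '' closedBall 0 ρ)) := by
        ext s
        simp only [hT, mem_inter_iff, mem_ofPred_eq, mem_iInter, mem_preimage]
        constructor
        · rintro ⟨h1, h2⟩
          exact ⟨h2, fun t ht => ⟨h2, image_mono ball_subset_closedBall (h1 t ht)⟩⟩
        · rintro ⟨h1, h2⟩
          exact ⟨aux_seg hf inj h' hp hρ1 (hsc x hx' s h1) (hsc y hy' s h1)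
            (fun t ht => (h2 t ht).2), h1⟩
      rw [this]
      refine isClosed_Icc.inter (isClosed_biInter fun t ht => ?_)
      refine ContinuousOn.preimage_isClosed_of_isClosed ?_ isClosed_Icc hclosed
      intro s hs
      exact ((hcontf x hx' s hs).add (continuousAt_const.mul
        ((hcontf y hy' s hs).sub (hcontf x hx' s hs)))).continuousWithinAt
    have h0 : (0:ℝ) ∈ T := by
      intro t ht
      simp only [ofReal_zero, zero_mul, sub_self, mul_zero, add_zero]
      exact ⟨0, by simpa using (norm_nonneg x).trans_lt hx', rfl⟩
    have hsub : Icc (0:ℝ) 1 ⊆ T := by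
      refine IsClosed.Icc_subset_of_forall_mem_nhdsWithin hTc h0 ?_
      rintro s ⟨hs, hs1⟩
      have hs' : s ∈ Icc (0:ℝ) 1 := ⟨hs1.1, hs1.2.le⟩
      refine mem_nhdsWithin_of_mem_nhds ?_
      refine IsCompact.eventually_forall_of_forall_eventually isCompact_Icc ?_
      intro t ht
      have hca : ContinuousAt (fun p : ℝ × ℝ =>
          f (p.1 * x) + (p.2:ℂ) * (f (p.1 * y) - f (p.1 * x))) (s, t) := by
        have h1 : ContinuousAt (fun p : ℝ × ℝ => f (p.1 * x)) (s,t) :=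
          ContinuousAt.comp (g := fun s : ℝ => f (s * x)) (f := Prod.fst) (hcontf x hx' s hs') continuousAt_fst
        have h2 : ContinuousAt (fun p : ℝ × ℝ => f (p.1 * y)) (s,t) :=
          ContinuousAt.comp (g := fun s : ℝ => f (s * y)) (f := Prod.fst) (hcontf y hy' s hs') continuousAt_fst
        have h3 : ContinuousAt (fun p : ℝ × ℝ => (p.2 : ℂ)) (s,t) := by fun_prop
        exact h1.add (h3.mul (h2.sub h1))
      exact hca (hopen.mem_nhds (hs t ht))
    intro t ht
    have := hsub (right_mem_Icc.2 zero_le_one) t ht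
    simp only [ofReal_one, one_mul] at this
    exact image_mono hbb this
  rintro _ ⟨x, hx, rfl⟩ _ ⟨y, hy, rfl⟩ α β hα hβ hαβ
  have := main x hx y hy β ⟨hβ, by linarith⟩
  convert this using 1
  have : α = 1 - β := by linarith
  subst this
  simp only [real_smul]; push_cast; ring

open Topology in
/-- Miller-Mocanu lemma. -/
lemma aux_mm {v : ℂ → ℂ} (hv : DifferentiableOn ℂ v (ball 0 1)) (hv0 : v 0 = 1)
    (hne : ∃ z ∈ ball (0:ℂ) 1, (v z).re ≤ 0) :
    ∃ z ∈ ball (0:ℂ) 1, (v z).re = 0 ∧ (z * deriv v z).im = 0 ∧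
      (z * deriv v z).re ≤ - (1 + (v z).im ^ 2) / 2 := by
  obtain ⟨y, hy, hvy⟩ := hne
  have hy1 : ‖y‖ < 1 := by simpa using hy
  have hcb : closedBall (0:ℂ) ‖y‖ ⊆ ball 0 1 := closedBall_subset_ball hy1
  have hcre : ContinuousOn (fun z => (v z).re) (closedBall (0:ℂ) ‖y‖) :=
    Complex.continuous_re.comp_continuousOn (hv.continuousOn.mono hcb)
  have hcomp : IsCompact (closedBall (0:ℂ) ‖y‖ ∩ (fun z => (v z).re) ⁻¹' Iic 0) :=
    (isCompact_closedBall (0:ℂ) ‖y‖).of_isClosed_subset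
      (hcre.preimage_isClosed_of_isClosed isClosed_closedBall isClosed_Iic) inter_subset_left
  obtain ⟨z, ⟨hzm, hz0⟩, hzmin⟩ := hcomp.exists_isMinOn ⟨y, by simp, hvy⟩ continuous_norm.continuousOn
  simp only [mem_preimage, mem_Iic] at hz0
  have hz1 : ‖z‖ ≤ ‖y‖ := by simpa using hzm
  have hzb : z ∈ ball (0:ℂ) 1 := hcb hzm
  have hpos : ∀ x : ℂ, ‖x‖ < ‖z‖ → 0 < (v x).re := by
    intro x hx
    by_contra hcon
    have := hzmin (show x ∈ _ from ⟨by simpa using hx.le.trans hz1, not_lt.1 hcon⟩)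
    simp only [mem_ofPred_eq] at this
    linarith
  have hzne : z ≠ 0 := by
    rintro rfl
    rw [hv0] at hz0; simp at hz0; linarith
  have hzn : 0 < ‖z‖ := norm_pos_iff.2 hzne
  have hvd : HasDerivAt v (deriv v z) z :=
    (hv.differentiableAt (isOpen_ball.mem_nhds hzb)).hasDerivAt
  have hge : ∀ x : ℂ, ‖x‖ ≤ ‖z‖ → 0 ≤ (v x).re := by
    intro x hx
    have hxb : x ∈ ball (0:ℂ) 1 := by simpa using (hx.trans hz1).trans_lt hy1
    have hc : ContinuousAt v x := hv.continuousOn.continuousAt (isOpen_ball.mem_nhds hxb)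
    have hc2 : Tendsto (fun t : ℝ => (v (t * x)).re) (𝓝[<] 1) (𝓝 (v x).re) := by
      have h1 : Tendsto (fun t : ℝ => (t:ℂ) * x) (𝓝[<] 1) (𝓝 x) := by
        have : Continuous (fun t : ℝ => (t:ℂ) * x) := by fun_prop
        have h2 := this.tendsto 1
        simp only [ofReal_one, one_mul] at h2
        exact h2.mono_left nhdsWithin_le_nhds
      exact (Complex.continuous_re.tendsto _).comp (hc.tendsto.comp h1)
    refine ge_of_tendsto hc2 ?_
    filter_upwards [Ioo_mem_nhdsLT (show (0:ℝ) < 1 by norm_num)] with t ht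
    refine (hpos _ ?_).le
    rw [norm_mul, Complex.norm_real, Real.norm_eq_abs, abs_of_pos ht.1]
    nlinarith [ht.2, ht.1, norm_nonneg x]
  have hre : (v z).re = 0 := le_antisymm hz0 (hge z le_rfl)
  refine ⟨z, hzb, hre, ?_, ?_⟩
  · -- tangential
    have h1 : HasDerivAt (fun t : ℝ => z * Complex.exp (t * I)) (z * I) 0 := by
      have : HasDerivAt (fun t : ℂ => z * Complex.exp (t * I)) (z * (Complex.exp (0 * I) * (1 * I))) ((0:ℝ):ℂ) := by
        have := (((hasDerivAt_id ((0:ℝ):ℂ)).mul_const I).cexp).const_mul z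
        simpa using this
      simpa using this.comp_ofReal
    have h2 : HasDerivAt (fun t : ℝ => v (z * Complex.exp (t * I))) (deriv v z * (z * I)) 0 := by
      refine HasDerivAt.comp (h₂ := v) (0:ℝ) ?_ h1
      simpa using hvd
    have h3 : HasDerivAt (fun t : ℝ => (v (z * Complex.exp (t * I))).re) (deriv v z * (z * I)).re 0 :=
      Complex.reCLM.hasFDerivAt.comp_hasDerivAt (0:ℝ) h2
    have h4 : IsLocalMin (fun t : ℝ => (v (z * Complex.exp (t * I))).re) 0 := by
      refine Eventually.of_forall fun t => ?_
      simp only [ofReal_zero, zero_mul, Complex.exp_zero, mul_one]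
      rw [hre]
      refine hge _ ?_
      rw [norm_mul, Complex.norm_exp_ofReal_mul_I, mul_one]
    have h5 := h4.hasDerivAt_eq_zero h3
    have : (deriv v z * (z * I)) = (z * deriv v z) * I := by ring
    rw [this, mul_I_re] at h5
    linarith
  · set φ : ℂ → ℂ := fun x => (1 - v x) / (1 + v x) with hφ
    have hne : ∀ x : ℂ, ‖x‖ ≤ ‖z‖ → 1 + v x ≠ 0 := by
      intro x hx h
      have := hge x hx
      have h2 := congrArg Complex.re h
      simp at h2; linarith
    have hbz : ball (0:ℂ) ‖z‖ ⊆ ball 0 1 := ball_subset_ball (hz1.trans hy1.le)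
    have hφd : DifferentiableOn ℂ φ (ball 0 ‖z‖) := by
      refine DifferentiableOn.div ((differentiableOn_const 1).sub (hv.mono hbz))
        ((differentiableOn_const 1).add (hv.mono hbz)) ?_
      intro x hx
      exact hne x (by simpa using (mem_ball_zero_iff.1 hx).le)
    have hφ0 : φ 0 = 0 := by simp [hφ, hv0]
    have hnle : ∀ x : ℂ, ‖x‖ ≤ ‖z‖ → ‖φ x‖ ≤ 1 := by
      intro x hx
      have h1 := hge x hx
      simp only [hφ, norm_div]
      rw [div_le_one (norm_pos_iff.2 (hne x hx))]
      rw [← sq_le_sq₀ (norm_nonneg _) (norm_nonneg _), Complex.sq_norm, Complex.sq_norm,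
        normSq_apply, normSq_apply]
      simp only [sub_re, sub_im, add_re, add_im, one_re, one_im]
      nlinarith
    have hS : ∀ x ∈ ball (0:ℂ) ‖z‖, ‖φ x‖ ≤ ‖x‖ / ‖z‖ := by
      intro x hx
      have := Complex.dist_le_div_mul_dist_of_mapsTo_ball (R₂ := 1) hφd
        (fun y hy => by
          rw [hφ0]
          simpa using hnle y (mem_ball_zero_iff.1 hy).le) hx
      rw [hφ0, dist_zero_right, dist_zero_right] at this
      rw [div_eq_inv_mul, ← one_div]; exact this
    have hnz : 1 + v z ≠ 0 := hne z le_rfl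
    have hφz : HasDerivAt φ (-2 * deriv v z / (1 + v z) ^ 2) z := by
      have := (hvd.const_sub 1).fun_div (hvd.const_add 1) hnz
      exact this.congr_deriv (by ring)
    have h1 : HasDerivAt (fun t : ℝ => (t:ℂ) * z) z 1 := by
      have := (hasDerivAt_id (1:ℝ)).ofReal_comp.mul_const z
      simpa using this
    have h2 : HasDerivAt (fun t : ℝ => φ (t * z)) (-2 * deriv v z / (1 + v z) ^ 2 * z) 1 := by
      refine HasDerivAt.comp (h₂ := φ) (1:ℝ) ?_ h1
      simpa using hφz
    have h3 := h2.norm_sq.sub ((hasDerivAt_id (1:ℝ)).pow 2)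
    have hz1' : ‖φ z‖ ^ 2 = 1 := by
      simp only [hφ]
      rw [norm_div, div_pow, div_eq_one_iff_eq (by simpa using hnz), Complex.sq_norm, Complex.sq_norm,
        normSq_apply, normSq_apply]
      simp [hre]
    have h4 : 0 ≤ 2 * inner ℝ (φ z) (-2 * deriv v z / (1 + v z) ^ 2 * z) - 2 := by
      set k : ℝ → ℝ := fun t => ‖φ (t * z)‖ ^ 2 - t ^ 2 with hk
      have hkd : HasDerivAt k (2 * inner ℝ (φ z) (-2 * deriv v z / (1 + v z) ^ 2 * z) - 2) 1 := by
        have h3' := h3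
        simp only [ofReal_one, one_mul] at h3'
        refine h3'.congr_deriv (by simp)
      have hk1 : k 1 = 0 := by simp [hk, hz1']
      refine ge_of_tendsto (hasDerivAt_iff_tendsto_slope_left_right.1 hkd).1 ?_
      filter_upwards [Ioo_mem_nhdsLT (show (0:ℝ) < 1 by norm_num)] with t ht
      have hn : ‖(t:ℂ) * z‖ = t * ‖z‖ := by
        rw [norm_mul, Complex.norm_real, Real.norm_eq_abs, abs_of_pos ht.1]
      have := hS (t * z) (by rw [mem_ball_zero_iff, hn]; nlinarith [ht.2])
      rw [hn, mul_div_assoc, div_self hzn.ne', mul_one] at this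
      have hkt : k t ≤ 0 := by
        simp only [hk]
        have := pow_le_pow_left₀ (norm_nonneg _) this 2
        linarith
      rw [slope_def_field, hk1]
      exact div_nonneg_of_nonpos (by linarith) (by linarith [ht.2])
    have h5 : inner ℝ (φ z) (-2 * deriv v z / (1 + v z) ^ 2 * z)
        = -2 * (z * deriv v z).re / (1 + (v z).im ^ 2) := by
      rw [Complex.inner]
      have e : v z = (v z).im * I := by
        apply Complex.ext <;> simp [hre]
      have hs : (1 - (v z).im * I) ≠ 0 := by
        intro h; have := congrArg Complex.re h; simp at this
      have hs2 : (1 + (v z).im * I) ≠ 0 := by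
        intro h; have := congrArg Complex.re h; simp at this
      have hs3 : ((1 + (v z).im ^ 2 : ℝ):ℂ) = (1 + (v z).im * I) * (1 - (v z).im * I) := by
        push_cast; ring_nf; simp
      have hs4 : (1 + (v z).im ^ 2) ≠ 0 := by positivity
      have : -2 * deriv v z / (1 + v z) ^ 2 * z * (starRingEnd ℂ) (φ z)
          = ((-2 / (1 + (v z).im ^ 2) : ℝ) : ℂ) * (z * deriv v z) := by
        simp only [hφ]
        rw [e]
        simp only [map_div₀, map_sub, map_add, map_mul, map_one, conj_ofReal, conj_I, mul_neg]
        rw [ofReal_div, show (((v z).im:ℂ) * I).im = (v z).im by simp, hs3, sub_neg_eq_add, ← sub_eq_add_neg]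
        push_cast
        field_simp
      rw [this, re_ofReal_mul]; ring
    rw [h5] at h4
    have hpos2 : 0 < 1 + (v z).im ^ 2 := by positivity
    have h6 : 1 ≤ -2 * (z * deriv v z).re / (1 + (v z).im ^ 2) := by linarith
    rw [le_div_iff₀ hpos2] at h6
    linarith

/-- Riccati -/
lemma aux_ric {w : ℂ → ℂ} {b c α D K : ℝ} (hw : DifferentiableOn ℂ w (ball 0 1)) (hw0 : w 0 = 0)
    (hα : 0 < α)
    (eq : ∀ z ∈ ball (0:ℂ) 1, z * deriv w z * (1 - z) + w z ^ 2 + (c - 1) * w z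
      = z * (w z ^ 2 + (b + 2) * w z + 2 * b))
    (hD : D = b + 3 - c) (hK : K = 2 * b - α * D) (hK0 : 0 ≤ K)
    (hnd : K = 0 → 0 < D ∧ 0 < α / 2 - α ^ 2 + (c - 1) * α)
    (hC0 : K ^ 2 / 2 ≤ (α / 2 - α ^ 2 + (c - 1) * α) * K)
    (hC1 : D ^ 2 / 2 ≤ (1 / (2 * α) + 1) * K + (2 * α - (c - 1)) * D) :
    ∀ z ∈ ball (0:ℂ) 1, -α < (w z).re := by
  by_contra hcon
  push Not at hcon
  obtain ⟨y, hy, hyw⟩ := hcon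
  have hαc : (α:ℂ) ≠ 0 := by exact_mod_cast hα.ne'
  obtain ⟨z, hz, h1, h2, h3⟩ := aux_mm (v := fun x => 1 + w x / α)
    ((differentiableOn_const 1).add (hw.div_const _)) (by simp [hw0])
    ⟨y, hy, by
      simp only [add_re, one_re, div_ofReal_re]
      have : (w y).re / α ≤ -1 := by rw [div_le_iff₀ hα]; linarith
      linarith⟩
  have hd : deriv (fun x => 1 + w x / α) z = deriv w z / α := by
    simp
  rw [hd] at h2 h3
  rw [← mul_div_assoc, div_ofReal_im] at h2
  rw [← mul_div_assoc, div_ofReal_re] at h3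
  simp only [add_re, one_re, div_ofReal_re, add_im, one_im, div_ofReal_im, zero_add] at h1 h3
  have hwr : (w z).re = -α := by
    field_simp at h1; linarith
  have hTi : (z * deriv w z).im = 0 := by
    simpa [hα.ne'] using h2
  set ρ := (w z).im with hρ
  set s := -(z * deriv w z).re with hs
  have hs' : (α ^ 2 + ρ ^ 2) / (2 * α) ≤ s := by
    rw [div_le_iff₀ hα] at h3
    have : (α ^ 2 + ρ ^ 2) / (2 * α) = (1 + (ρ / α) ^ 2) / 2 * α := by field_simp
    rw [this]; linarith
  have hT : z * deriv w z = ((-s : ℝ) : ℂ) := by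
    apply Complex.ext
    · simp [hs]
    · simp [hTi]
  have hwz : w z = -α + ρ * I := by
    apply Complex.ext <;> simp [hwr, hρ]
  have hzn : ‖z‖ < 1 := by simpa using hz
  have hz1 : 1 - z ≠ 0 := by
    intro h
    have : z = 1 := by linear_combination -h
    rw [this] at hzn; simp at hzn
  set u := z / (1 - z) with hu
  have hure : -1/2 < u.re := by
    have hnp : 0 < normSq (1 - z) := normSq_pos.2 hz1
    have e : u.re = (z.re * (1 - z.re) - z.im * z.im) / normSq (1 - z) := by
      rw [hu, div_re]
      simp only [sub_re, sub_im, one_re, one_im]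
      ring
    rw [e, lt_div_iff₀ hnp]
    have h8 : normSq z < 1 := by
      rw [← Complex.sq_norm]; nlinarith [norm_nonneg z]
    simp only [normSq_apply, sub_re, sub_im, one_re, one_im] at *
    nlinarith
  have hmain : ((-s : ℝ) : ℂ) = u * (D * w z + 2 * b) - w z ^ 2 - (c - 1) * w z := by
    have e := eq z hz
    rw [hT] at e
    have hzu : z = u * (1 - z) := by rw [hu]; field_simp
    have : (1 - z) * (((-s : ℝ) : ℂ) - (u * (D * w z + 2 * b) - w z ^ 2 - (c - 1) * w z)) = 0 := by
      rw [hD]; push_cast at e ⊢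
      linear_combination e + (((b:ℂ) + 3 - c) * w z + 2 * b) * hzu
    have := (mul_eq_zero.1 this).resolve_left hz1
    linear_combination this
  rw [hwz] at hmain
  have hr := congrArg Complex.re hmain
  have hi := congrArg Complex.im hmain
  simp [pow_two] at hr hi
  set x := u.re
  set y' := u.im
  have e1 : x * K - y' * (D * ρ) = -s + α ^ 2 - ρ ^ 2 - (c - 1) * α := by rw [hK]; linarith
  have e2 : x * (D * ρ) + y' * K = -(2 * α - (c - 1)) * ρ := by rw [hK]; linarith
  have e3 : x * (K ^ 2 + D ^ 2 * ρ ^ 2) = -((s - α ^ 2 + ρ ^ 2 + (c - 1) * α) * K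
      + (2 * α - (c - 1)) * D * ρ ^ 2) := by
    linear_combination K * e1 + D * ρ * e2
  have hsK : (α ^ 2 + ρ ^ 2) / (2 * α) * K ≤ s * K := mul_le_mul_of_nonneg_right hs' hK0
  have hsp : (α ^ 2 + ρ ^ 2) / (2 * α) = α / 2 + 1 / (2 * α) * ρ ^ 2 := by field_simp
  have hC1' := mul_le_mul_of_nonneg_right hC1 (sq_nonneg ρ)
  rw [hsp] at hsK
  have e4 : x * (K ^ 2 + D ^ 2 * ρ ^ 2) ≤ -(K ^ 2 + D ^ 2 * ρ ^ 2) / 2 := by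
    rw [e3]; linarith
  by_cases hdeg : K ^ 2 + D ^ 2 * ρ ^ 2 = 0
  · have hDρ := mul_nonneg (sq_nonneg D) (sq_nonneg ρ)
    have hKz2 : K ^ 2 = 0 := le_antisymm (by linarith) (sq_nonneg K)
    have hKz : K = 0 := by simpa using hKz2
    obtain ⟨hD0, hp⟩ := hnd hKz
    have hρ0 : ρ = 0 := by
      rw [hKz] at hdeg
      have : D ^ 2 * ρ ^ 2 = 0 := by linarith
      have := (mul_eq_zero.1 this).resolve_left (by positivity)
      simpa using this
    rw [hsp] at hs'
    rw [hKz, hρ0] at e1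
    rw [hρ0] at hs'
    simp only [mul_zero, sub_zero, ne_eq, OfNat.ofNat_ne_zero, not_false_eq_true, zero_pow, add_zero] at e1 hs'
    linarith
  · have hpp : 0 < K ^ 2 + D ^ 2 * ρ ^ 2 := lt_of_le_of_ne (by positivity) (Ne.symm hdeg)
    have := mul_lt_mul_of_pos_right hure hpp
    linarith

/-- The coefficients. -/
noncomputable def cf (b c : ℝ) (n : ℕ) : ℝ := (ascPochhammer ℝ n).eval b / (ascPochhammer ℝ n).eval c

lemma cf_zero (b c : ℝ) : cf b c 0 = 1 := by simp [cf]

lemma cf_succ {b c : ℝ} (hc : 0 < c) (n : ℕ) : cf b c (n+1) * (c + n) = cf b c n * (b + n) := by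
  have h1 : 0 < (ascPochhammer ℝ n).eval c := ascPochhammer_pos n c hc
  have h2 : 0 < c + n := by positivity
  simp only [cf, ascPochhammer_succ_eval]
  field_simp

lemma cf_bd {b c : ℝ} (hb : 0 < b) (hbc : b ≤ c) (n : ℕ) : 0 ≤ cf b c n ∧ cf b c n ≤ 1 := by
  have hc : 0 < c := hb.trans_le hbc
  induction n with
  | zero => simp [cf_zero]
  | succ n ih =>
    have h := cf_succ (b := b) hc n
    have h2 : 0 < c + n := by positivity
    have e : cf b c (n+1) = cf b c n * (b + n) / (c + n) := by
      rw [eq_div_iff h2.ne', h]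
    rw [e]
    constructor
    · have := ih.1
      positivity
    · rw [div_le_one h2]
      nlinarith [ih.1, ih.2, (Nat.cast_nonneg n : (0:ℝ) ≤ n)]

lemma beta_ratio {b d : ℝ} (hb : 0 < b) (hd : 0 < d) (n : ℕ) :
    ProbabilityTheory.beta (b + n) d / ProbabilityTheory.beta b d = cf b (b + d) n := by
  have hbd := ProbabilityTheory.beta_pos hb hd
  induction n with
  | zero => simp [cf_zero, hbd.ne']
  | succ n ih =>
    have hc : 0 < b + d := by positivity
    have h2 : 0 < b + d + n := by positivity
    have h := cf_succ (b := b) hc n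
    have hp : 0 < b + n := by positivity
    have e : ProbabilityTheory.beta (b + (n+1 : ℕ)) d * (b + d + n) =
        ProbabilityTheory.beta (b + n) d * (b + n) := by
      unfold ProbabilityTheory.beta
      have e1 : b + ((n+1 : ℕ):ℝ) = (b + n) + 1 := by push_cast; ring
      have e2 : b + n + 1 + d = (b + d + n) + 1 := by ring
      have e3 : b + n + d = b + d + n := by ring
      rw [e1, e2, e3, Real.Gamma_add_one hp.ne', Real.Gamma_add_one h2.ne']
      have := Real.Gamma_pos_of_pos h2
      field_simp
    rw [← ih] at h
    have : (ProbabilityTheory.beta (b + (n+1 : ℕ)) d / ProbabilityTheory.beta b d) * (b + d + n)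
       = cf b (b+d) (n+1) * (b + d + n) := by
      rw [h, div_mul_eq_mul_div, e]; ring
    exact mul_right_cancel₀ h2.ne' this

lemma moments {b c : ℝ} (hb : 0 < b) (hbc : b ≤ c) : ∃ μ : Measure ℝ, IsProbabilityMeasure μ ∧
    (∀ᵐ t ∂μ, 0 < t ∧ t ≤ 1) ∧ ∀ n : ℕ, ∫ t, t ^ n ∂μ = cf b c n := by
  rcases hbc.eq_or_lt with rfl | hlt
  · refine ⟨Measure.dirac 1, inferInstance, ?_, ?_⟩
    · rw [ae_dirac_eq]; simp
    · intro n
      have : (ascPochhammer ℝ n).eval b ≠ 0 := (ascPochhammer_pos n b hb).ne'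
      simp [cf, this]
  · obtain ⟨d, hd, rfl⟩ : ∃ d, 0 < d ∧ c = b + d := ⟨c - b, by linarith, by ring⟩
    have hmeas : Measurable (ProbabilityTheory.betaPDF b d) :=
      (ProbabilityTheory.measurable_betaPDFReal b d).ennreal_ofReal
    refine ⟨ProbabilityTheory.betaMeasure b d, ProbabilityTheory.isProbabilityMeasureBeta hb hd, ?_, ?_⟩
    · unfold ProbabilityTheory.betaMeasure
      rw [ae_withDensity_iff hmeas]
      refine Eventually.of_forall fun t ht => ?_
      constructor
      · by_contra h
        exact ht (ProbabilityTheory.betaPDF_eq_zero_of_nonpos (not_lt.1 h))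
      · by_contra h
        exact ht (ProbabilityTheory.betaPDF_eq_zero_of_one_le (not_le.1 h).le)
    · intro n
      have hnn : ∀ a, 0 < a → ∀ t, 0 ≤ ProbabilityTheory.betaPDFReal a d t := by
        intro a ha t
        by_cases h : 0 < t ∧ t < 1
        · exact (ProbabilityTheory.betaPDFReal_pos h.1 h.2 ha hd).le
        · simp [ProbabilityTheory.betaPDFReal, h]
      have hbn : 0 < b + n := by positivity
      have hone : ∫ t, ProbabilityTheory.betaPDFReal (b + n) d t = 1 := by
        rw [integral_eq_lintegral_of_nonneg_ae (Eventually.of_forall (hnn _ hbn))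
          (ProbabilityTheory.measurable_betaPDFReal _ d).aestronglyMeasurable]
        have := ProbabilityTheory.lintegral_betaPDF_eq_one hbn hd
        unfold ProbabilityTheory.betaPDF at this
        rw [this]; simp
      unfold ProbabilityTheory.betaMeasure
      rw [integral_withDensity_eq_integral_toReal_smul hmeas
        (Eventually.of_forall fun t => ENNReal.ofReal_lt_top)]
      have e : ∀ t, (ProbabilityTheory.betaPDF b d t).toReal • t ^ n =
          cf b (b + d) n * ProbabilityTheory.betaPDFReal (b + n) d t := by
        intro t
        unfold ProbabilityTheory.betaPDF
        rw [ENNReal.toReal_ofReal (hnn b hb t), ← beta_ratio hb hd, smul_eq_mul]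
        unfold ProbabilityTheory.betaPDFReal
        by_cases h : 0 < t ∧ t < 1
        · rw [if_pos h, if_pos h]
          have h1 := ProbabilityTheory.beta_pos hb hd
          have h2 := ProbabilityTheory.beta_pos hbn hd
          have : t ^ (b + n - 1) = t ^ (b - 1) * t ^ n := by
            rw [← Real.rpow_natCast t n, ← Real.rpow_add h.1]; congr 1; ring
          rw [this]
          field_simp
        · simp [h]
      simp_rw [e]
      rw [integral_const_mul, hone, mul_one]

lemma int_pos {μ : Measure ℝ} [IsProbabilityMeasure μ] {g : ℝ → ℝ} (hg : Integrable g μ)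
    (h : ∀ᵐ t ∂μ, 0 < g t) : 0 < ∫ t, g t ∂μ := by
  have h0 : 0 ≤ᵐ[μ] g := by filter_upwards [h] with t ht using ht.le
  refine lt_of_le_of_ne (integral_nonneg_of_ae h0) fun he => ?_
  have := (integral_eq_zero_iff_of_nonneg_ae h0 hg).1 he.symm
  obtain ⟨t, h1, h2⟩ := (h.and this).exists
  simp only [Pi.zero_apply] at h2
  linarith

lemma one_sub_bd {z : ℂ} {t : ℝ} (ht : 0 < t ∧ t ≤ 1) : 1 - ‖z‖ ≤ ‖1 - t * z‖ := by
  have h1 : ‖(t:ℂ) * z‖ ≤ ‖z‖ := by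
    rw [norm_mul, Complex.norm_real, Real.norm_eq_abs, abs_of_pos ht.1]
    nlinarith [norm_nonneg z, ht.2]
  have := norm_sub_norm_le (1:ℂ) (t * z)
  rw [norm_one] at this
  linarith

lemma ker_int {μ : Measure ℝ} [IsProbabilityMeasure μ] (hμ : ∀ᵐ t ∂μ, 0 < t ∧ t ≤ 1)
    {z w : ℂ} (hz : ‖z‖ < 1) (hw : ‖w‖ < 1) :
    Integrable (fun t : ℝ => ((1 - t * z) * (1 - t * w))⁻¹) μ := by
  refine Integrable.of_bound (C := ((1 - ‖z‖) * (1 - ‖w‖))⁻¹) ?_ ?_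
  · exact Measurable.aestronglyMeasurable (by fun_prop)
  · filter_upwards [hμ] with t ht
    rw [norm_inv, norm_mul]
    have h1 := one_sub_bd (z := z) ht
    have h2 := one_sub_bd (z := w) ht
    have h3 : 0 < 1 - ‖z‖ := by linarith
    have h4 : 0 < 1 - ‖w‖ := by linarith
    gcongr

lemma ker_ne {μ : Measure ℝ} [IsProbabilityMeasure μ] (hμ : ∀ᵐ t ∂μ, 0 < t ∧ t ≤ 1)
    {z w : ℂ} (hz : ‖z‖ < 1) (hw : ‖w‖ < 1) :
    ∫ t : ℝ, ((1 - t * z) * (1 - t * w))⁻¹ ∂μ ≠ 0 := by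
  have hI := ker_int hμ hz hw
  have hzr : |z.re| < 1 := (abs_re_le_norm z).trans_lt hz
  have hwr : |w.re| < 1 := (abs_re_le_norm w).trans_lt hw
  rw [abs_lt] at hzr hwr
  have hz' : ∀ t : ℝ, 0 < t ∧ t ≤ 1 → 0 < 1 - t * z.re := fun t ht => by nlinarith [ht.1, ht.2]
  have hw' : ∀ t : ℝ, 0 < t ∧ t ≤ 1 → 0 < 1 - t * w.re := fun t ht => by nlinarith [ht.1, ht.2]
  have him : ∀ t : ℝ, ((1 - t * z) * (1 - t * w)).im =
      - t * (z.im * (1 - t * w.re) + w.im * (1 - t * z.re)) := by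
    intro t; simp; ring
  have hre : ∀ t : ℝ, ((1 - t * z) * (1 - t * w)).re =
      (1 - t * z.re) * (1 - t * w.re) - t ^ 2 * (z.im * w.im) := by
    intro t; simp; ring
  have hnsq : ∀ t : ℝ, 0 < t ∧ t ≤ 1 → 0 < normSq ((1 - t * z) * (1 - t * w)) := by
    intro t ht
    refine normSq_pos.2 (mul_ne_zero ?_ ?_)
    · exact norm_pos_iff.1 (lt_of_lt_of_le (by linarith) (one_sub_bd ht))
    · exact norm_pos_iff.1 (lt_of_lt_of_le (by linarith) (one_sub_bd ht))
  intro h0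
  by_cases hs : z.im * w.im ≤ 0
  · have h1 : 0 < ∫ t : ℝ, (((1 - t * z) * (1 - t * w))⁻¹).re ∂μ := by
      refine int_pos hI.re ?_
      filter_upwards [hμ] with t ht
      rw [inv_re, hre]
      refine div_pos ?_ (hnsq t ht)
      have := mul_pos (hz' t ht) (hw' t ht)
      nlinarith [sq_nonneg t]
    have h2 : ∫ t : ℝ, (((1 - t * z) * (1 - t * w))⁻¹).re ∂μ =
      (∫ t : ℝ, ((1 - t * z) * (1 - t * w))⁻¹ ∂μ).re := integral_re hI
    rw [h2, h0] at h1; simp at h1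
  · have h2 : ∫ t : ℝ, (((1 - t * z) * (1 - t * w))⁻¹).im ∂μ =
      (∫ t : ℝ, ((1 - t * z) * (1 - t * w))⁻¹ ∂μ).im := integral_im hI
    rw [h0, zero_im] at h2
    rcases pos_and_pos_or_neg_and_neg_of_mul_pos (not_le.1 hs) with ⟨ha, hb⟩ | ⟨ha, hb⟩
    · have h1 : 0 < ∫ t : ℝ, (((1 - t * z) * (1 - t * w))⁻¹).im ∂μ := by
        refine int_pos hI.im ?_
        filter_upwards [hμ] with t ht
        rw [inv_im, him]
        refine div_pos ?_ (hnsq t ht)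
        have h3 := mul_pos ha (hw' t ht)
        have h4 := mul_pos hb (hz' t ht)
        have := mul_pos ht.1 (add_pos h3 h4)
        linarith
      linarith
    · have h1 : 0 < ∫ t : ℝ, -(((1 - t * z) * (1 - t * w))⁻¹).im ∂μ := by
        refine int_pos hI.im.neg ?_
        filter_upwards [hμ] with t ht
        rw [inv_im, him, ← neg_div, neg_neg]
        refine div_pos ?_ (hnsq t ht)
        have h3 := mul_pos (neg_pos.2 ha) (hw' t ht)
        have h4 := mul_pos (neg_pos.2 hb) (hz' t ht)
        have := mul_pos ht.1 (add_pos h3 h4)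
        linarith
      rw [integral_neg] at h1
      linarith

/-- Interchange of sum and integral. -/
lemma sum_int {μ : Measure ℝ} [IsProbabilityMeasure μ] (hμ : ∀ᵐ t ∂μ, 0 < t ∧ t ≤ 1)
    {A : ℕ → ℝ} (hA : ∀ n : ℕ, ∫ t, t ^ n ∂μ = A n) {z : ℂ} (e : ℕ → ℂ)
    (hs : Summable fun n => ‖e n‖ * ‖z‖ ^ n) :
    HasSum (fun n => e n * (A n * z ^ n)) (∫ t : ℝ, ∑' n, e n * ((t:ℂ) * z) ^ n ∂μ) := by
  have hintg : ∀ n : ℕ, Integrable (fun t : ℝ => e n * ((t:ℂ) * z) ^ n) μ := by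
    intro n
    refine Integrable.of_bound (C := ‖e n‖ * ‖z‖ ^ n) (Measurable.aestronglyMeasurable (by fun_prop)) ?_
    filter_upwards [hμ] with t ht
    rw [norm_mul, norm_pow, norm_mul, Complex.norm_real, Real.norm_eq_abs, abs_of_pos ht.1]
    have ht1 := ht.1
    gcongr
    nlinarith [norm_nonneg z, ht.2]
  have := hasSum_integral_of_summable_integral_norm hintg ?_
  · refine this.congr_fun fun n => ?_
    have e1 : ∀ t : ℝ, e n * ((t:ℂ) * z) ^ n = (e n * z ^ n) * ((t ^ n : ℝ) : ℂ) := by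
      intro t; push_cast; ring
    simp_rw [e1]
    rw [integral_const_mul, integral_complex_ofReal, hA]; ring
  · refine Summable.of_nonneg_of_le (fun n => integral_nonneg fun t => norm_nonneg _) (fun n => ?_) hs
    have h1 : ∫ t : ℝ, ‖e n * ((t:ℂ) * z) ^ n‖ ∂μ ≤ ∫ t : ℝ, ‖e n‖ * ‖z‖ ^ n ∂μ := by
      refine integral_mono_ae (hintg n).norm (integrable_const _) ?_
      filter_upwards [hμ] with t ht
      rw [norm_mul, norm_pow, norm_mul, Complex.norm_real, Real.norm_eq_abs, abs_of_pos ht.1]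
      have ht1 := ht.1
      gcongr
      nlinarith [norm_nonneg z, ht.2]
    simpa using h1

lemma hyper_eq (b c : ℝ) (z : ℂ) : hyperF 1 b c z = ∑' n : ℕ, (cf b c n : ℂ) * z ^ n := by
  unfold hyperF cf
  congr 1; funext n
  rw [ascPochhammer_eval_one]
  have : ((n.factorial : ℕ) : ℝ) ≠ 0 := by positivity
  congr 2
  field_simp

lemma f_props {b c : ℝ} (hb : 0 < b) (hbc : b ≤ c) :
    ∀ z ∈ ball (0:ℂ) 1, HasSum (fun n : ℕ => (cf b c n : ℂ) * z ^ (n+1)) (z * hyperF 1 b c z) ∧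
      Summable (fun n : ℕ => ((n:ℂ) + 1) * ((cf b c n : ℂ) * z ^ n)) ∧
      HasDerivAt (fun z : ℂ => z * hyperF 1 b c z)
        (∑' n : ℕ, ((n:ℂ) + 1) * ((cf b c n : ℂ) * z ^ n)) z := by
  have hn : ∀ n, ‖(cf b c n : ℂ)‖ ≤ 1 := by
    intro n
    rw [Complex.norm_real, Real.norm_eq_abs, abs_of_nonneg (cf_bd hb hbc n).1]
    exact (cf_bd hb hbc n).2
  have hsum : ∀ z ∈ ball (0:ℂ) 1, Summable (fun n : ℕ => (cf b c n : ℂ) * z ^ n) := by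
    intro z hz
    have hz1 : ‖z‖ < 1 := by simpa using hz
    refine Summable.of_norm_bounded (summable_geometric_of_lt_one (norm_nonneg z) hz1) fun n => ?_
    rw [norm_mul, norm_pow]
    exact mul_le_of_le_one_left (by positivity) (hn n)
  have hS : ∀ z ∈ ball (0:ℂ) 1, HasSum (fun n : ℕ => (cf b c n : ℂ) * z ^ (n+1)) (z * hyperF 1 b c z) := by
    intro z hz
    rw [hyper_eq]
    have := (hsum z hz).hasSum.mul_left z
    refine this.congr_fun fun n => ?_
    ring
  have hu : ∀ r : ℝ, 0 ≤ r → r < 1 → Summable (fun n : ℕ => ((n:ℝ) + 1) * r ^ n) := by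
    intro r h0 h1
    have := summable_choose_mul_geometric_of_norm_lt_one (R := ℝ) 1 (r := r) (by rwa [Real.norm_eq_abs, abs_of_nonneg h0])
    simpa using this
  have hbd : ∀ (r : ℝ) (n : ℕ) (y : ℂ), ‖y‖ ≤ r → ‖((n:ℂ) + 1) * ((cf b c n : ℂ) * y ^ n)‖ ≤ ((n:ℝ) + 1) * r ^ n := by
    intro r n y hy
    have e : ‖(n:ℂ) + 1‖ = (n:ℝ) + 1 := by
      have : ((n:ℂ) + 1) = ((n + 1 : ℕ) : ℂ) := by push_cast; ring
      rw [this, Complex.norm_natCast]; push_cast; ring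
    rw [norm_mul, norm_mul, norm_pow, e]
    have h1 : ‖(cf b c n : ℂ)‖ * ‖y‖ ^ n ≤ 1 * r ^ n := by
      gcongr
      exact hn n
    rw [one_mul] at h1
    gcongr
  intro z hz
  have hz1 : ‖z‖ < 1 := by simpa using hz
  refine ⟨hS z hz, Summable.of_norm_bounded (hu ‖z‖ (norm_nonneg z) hz1) fun n => hbd _ n z le_rfl, ?_⟩
  obtain ⟨r, hr, hr1⟩ := exists_between hz1
  have hr0 : 0 < r := (norm_nonneg z).trans_lt hr
  have hD := hasDerivAt_tsum_of_isPreconnected (𝕜 := ℂ) (g := fun (n : ℕ) (y : ℂ) => (cf b c n : ℂ) * y ^ (n+1))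
    (g' := fun (n : ℕ) (y : ℂ) => ((n:ℂ) + 1) * ((cf b c n : ℂ) * y ^ n))
    (hu r hr0.le hr1) (isOpen_ball (x := (0:ℂ)) (ε := r)) (convex_ball (0:ℂ) r).isPreconnected
    (fun n y hy => by
      have := (hasDerivAt_pow (n+1) y).const_mul (cf b c n : ℂ)
      refine this.congr_deriv ?_
      push_cast; ring)
    (fun n y hy => hbd r n y (by simpa using (mem_ball_zero_iff.1 hy).le))
    (y₀ := 0) (by simpa using hr0) (by simpa using summable_zero) (y := z) (by simpa using hr)
  refine hD.congr_of_eventuallyEq ?_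
  filter_upwards [isOpen_ball.mem_nhds hz] with y hy
  exact (hS y hy).tsum_eq.symm

lemma f_ode {b c : ℝ} (hb : 0 < b) (hbc : b ≤ c) (z : ℂ) (hz : z ∈ ball (0:ℂ) 1) :
    (1 - z) * z * deriv (fun z : ℂ => z * hyperF 1 b c z) z +
      (c - 2 - (b - 1) * z) * (z * hyperF 1 b c z) = (c - 1) * z := by
  obtain ⟨h1, h2, h3⟩ := f_props hb hbc z hz
  rw [h3.deriv]
  have hc : 0 < c := hb.trans_le hbc
  set f := z * hyperF 1 b c z
  set f' := ∑' n : ℕ, ((n:ℂ) + 1) * ((cf b c n : ℂ) * z ^ n)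
  have hT : HasSum (fun n : ℕ => (cf b c n : ℂ) * z ^ (n+1) * (n + c - 1)) (z * f' + (c - 2) * f) := by
    have := (h2.hasSum.mul_left z).add (h1.mul_left ((c:ℂ) - 2))
    refine this.congr_fun fun n => ?_
    ring
  have hT2 : HasSum (fun n : ℕ => (cf b c (n+1) : ℂ) * z ^ (n+2) * (n + 1 + c - 1)) (z * (z * f' + (b - 1) * f)) := by
    have := ((h2.hasSum.mul_left z).add (h1.mul_left ((b:ℂ) - 1))).mul_left z
    refine this.congr_fun fun n => ?_
    have e : (cf b c (n+1) : ℂ) * (c + n) = cf b c n * (b + n) := by exact_mod_cast cf_succ (b := b) hc n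
    linear_combination z ^ (n+2) * e
  have h4 := hT.tsum_eq
  rw [hT.summable.tsum_eq_zero_add] at h4
  have h5 := hT2.tsum_eq
  push_cast at h4
  rw [h5] at h4
  simp [cf_zero] at h4
  linear_combination -h4

lemma f_inj {b c : ℝ} (hb : 0 < b) (hbc : b ≤ c) :
    InjOn (fun z : ℂ => z * hyperF 1 b c z) (ball 0 1) ∧
    ∀ z ∈ ball (0:ℂ) 1, deriv (fun z : ℂ => z * hyperF 1 b c z) z ≠ 0 := by
  obtain ⟨μ, hP, hμ, hm⟩ := moments hb hbc
  have hlt : ∀ z : ℂ, ‖z‖ < 1 → ∀ t : ℝ, 0 < t ∧ t ≤ 1 → ‖(t:ℂ) * z‖ < 1 := by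
    intro z hz t ht
    rw [norm_mul, Complex.norm_real, Real.norm_eq_abs, abs_of_pos ht.1]
    nlinarith [norm_nonneg z, ht.2]
  have hne : ∀ z : ℂ, ‖z‖ < 1 → ∀ t : ℝ, 0 < t ∧ t ≤ 1 → 1 - (t:ℂ) * z ≠ 0 := by
    intro z hz t ht
    exact norm_pos_iff.1 (lt_of_lt_of_le (by linarith) (one_sub_bd ht))
  constructor
  · have hrep : ∀ z : ℂ, ‖z‖ < 1 → hyperF 1 b c z = ∫ t : ℝ, ((1 - t * z) * (1 - t * 0))⁻¹ ∂μ := by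
      intro z hz
      have h1 := sum_int hμ hm (z := z) (fun _ => 1)
        (by simpa using summable_geometric_of_lt_one (norm_nonneg z) hz)
      simp only [one_mul] at h1
      rw [hyper_eq, h1.tsum_eq]
      refine integral_congr_ae ?_
      filter_upwards [hμ] with t ht
      rw [tsum_geometric_of_norm_lt_one (hlt z hz t ht)]
      simp
    intro z hz w hw h
    have hz1 : ‖z‖ < 1 := by simpa using hz
    have hw1 : ‖w‖ < 1 := by simpa using hw
    by_contra hzw
    simp only at h
    rw [hrep z hz1, hrep w hw1] at h
    have e : z * (∫ t : ℝ, ((1 - t * z) * (1 - t * 0))⁻¹ ∂μ) - w * (∫ t : ℝ, ((1 - t * w) * (1 - t * 0))⁻¹ ∂μ)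
        = (z - w) * ∫ t : ℝ, ((1 - t * z) * (1 - t * w))⁻¹ ∂μ := by
      rw [← integral_const_mul, ← integral_const_mul, ← integral_const_mul, ← integral_sub]
      · refine integral_congr_ae ?_
        filter_upwards [hμ] with t ht
        have h1 := hne z hz1 t ht
        have h2 := hne w hw1 t ht
        simp only [mul_zero, sub_zero, mul_one]
        rw [mul_inv]
        linear_combination -(z * (1 - (t:ℂ) * z)⁻¹) * mul_inv_cancel₀ h2 + w * (1 - (t:ℂ) * w)⁻¹ * mul_inv_cancel₀ h1
      · exact (ker_int hμ hz1 (by simp)).const_mul z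
      · exact (ker_int hμ hw1 (by simp)).const_mul w
    rw [h, sub_self] at e
    rcases mul_eq_zero.1 e.symm with h1 | h1
    · exact hzw (sub_eq_zero.1 h1)
    · exact ker_ne hμ hz1 hw1 h1
  · intro z hz
    have hz1 : ‖z‖ < 1 := by simpa using hz
    rw [(f_props hb hbc z hz).2.2.deriv]
    have h1 := sum_int hμ hm (z := z) (fun n => (n:ℂ) + 1) (by
      have := summable_choose_mul_geometric_of_norm_lt_one (R := ℝ) 1 (r := ‖z‖) (by simpa using hz1)
      refine this.congr fun n => ?_
      have e2 : ((n:ℂ) + 1) = ((n + 1 : ℕ) : ℂ) := by push_cast; ring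
      rw [e2, Complex.norm_natCast]; simp)
    rw [h1.tsum_eq]
    have : ∫ t : ℝ, ∑' n : ℕ, ((n:ℂ) + 1) * ((t:ℂ) * z) ^ n ∂μ = ∫ t : ℝ, ((1 - t * z) * (1 - t * z))⁻¹ ∂μ := by
      refine integral_congr_ae ?_
      filter_upwards [hμ] with t ht
      have := (hasSum_choose_mul_geometric_of_norm_lt_one 1 (hlt z hz1 t ht)).tsum_eq
      simp only [Nat.choose_one_right, Nat.cast_add, Nat.cast_one] at this
      rw [this, one_div, pow_two]
    rw [this]
    exact ker_ne hμ hz1 hz1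

open Topology in
lemma f_pos {b c : ℝ} (hb : 0 < b) (hbc : b ≤ c) (h : (2 ≤ c ∧ b ≤ 2) ∨ 3 - b ≤ c) {f : ℂ → ℂ}
    (hfdef : f = fun z : ℂ => z * hyperF 1 b c z) (hf : DifferentiableOn ℂ f (ball 0 1))
    (hf' : ∀ z ∈ ball (0:ℂ) 1, deriv f z ≠ 0) :
    ∀ z ∈ ball (0:ℂ) 1, 0 < (1 + z * deriv (deriv f) z / deriv f z).re := by
  have hnhds : ∀ z ∈ ball (0:ℂ) 1, ball (0:ℂ) 1 ∈ 𝓝 z := fun z hz => isOpen_ball.mem_nhds hz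
  have hd0 : ∀ z ∈ ball (0:ℂ) 1, HasDerivAt f (deriv f z) z := fun z hz =>
    (hf.differentiableAt (hnhds z hz)).hasDerivAt
  have hf1 : DifferentiableOn ℂ (deriv f) (ball 0 1) := hf.deriv isOpen_ball
  have hd1 : ∀ z ∈ ball (0:ℂ) 1, HasDerivAt (deriv f) (deriv (deriv f) z) z := fun z hz =>
    (hf1.differentiableAt (hnhds z hz)).hasDerivAt
  have hf2 : DifferentiableOn ℂ (deriv (deriv f)) (ball 0 1) := hf1.deriv isOpen_ball
  have hd2 : ∀ z ∈ ball (0:ℂ) 1, HasDerivAt (deriv (deriv f)) (deriv (deriv (deriv f)) z) z := fun z hz =>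
    (hf2.differentiableAt (hnhds z hz)).hasDerivAt
  have ode0 : ∀ z ∈ ball (0:ℂ) 1, (1 - z) * z * deriv f z + (c - 2 - (b - 1) * z) * f z - (c - 1) * z = 0 := by
    intro z hz
    have := f_ode hb hbc z hz
    rw [hfdef]; linear_combination this
  have ode1 : ∀ z ∈ ball (0:ℂ) 1, (1 - z) * z * deriv (deriv f) z + (c - 1 - (b + 1) * z) * deriv f z
      - (b - 1) * f z - (c - 1) = 0 := by
    intro z hz
    have hid := hasDerivAt_id z
    have H := (((((hid.const_sub 1).fun_mul hid).fun_mul (hd1 z hz)).fun_add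
      (((hid.const_mul ((b:ℂ) - 1)).const_sub ((c:ℂ) - 2)).fun_mul (hd0 z hz))).fun_sub (hid.const_mul ((c:ℂ) - 1)))
    have Z : HasDerivAt (fun z : ℂ => (0:ℂ)) 0 z := hasDerivAt_const z 0
    have Z' := Z.congr_of_eventuallyEq (f₁ := fun z => (1 - z) * z * deriv f z + (c - 2 - (b - 1) * z) * f z - (c - 1) * z)
      (by filter_upwards [hnhds z hz] with y hy using ode0 y hy)
    have := H.unique Z'
    simp only [id] at this
    linear_combination this
  have ode2 : ∀ z ∈ ball (0:ℂ) 1, (1 - z) * z * deriv (deriv (deriv f)) z + (c - (b + 3) * z) * deriv (deriv f) z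
      - 2 * b * deriv f z = 0 := by
    intro z hz
    have hid := hasDerivAt_id z
    have H := ((((((hid.const_sub 1).fun_mul hid).fun_mul (hd2 z hz)).fun_add
      (((hid.const_mul ((b:ℂ) + 1)).const_sub ((c:ℂ) - 1)).fun_mul (hd1 z hz))).fun_sub
        ((hd0 z hz).const_mul ((b:ℂ) - 1))).sub_const ((c:ℂ) - 1))
    have Z : HasDerivAt (fun z : ℂ => (0:ℂ)) 0 z := hasDerivAt_const z 0
    have Z' := Z.congr_of_eventuallyEq (f₁ := fun z => (1 - z) * z * deriv (deriv f) z + (c - 1 - (b + 1) * z) * deriv f z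
      - (b - 1) * f z - (c - 1))
      (by filter_upwards [hnhds z hz] with y hy using ode1 y hy)
    have := H.unique Z'
    simp only [id] at this
    linear_combination this
  set w : ℂ → ℂ := fun z => z * deriv (deriv f) z / deriv f z with hw
  have hwd : ∀ z ∈ ball (0:ℂ) 1, HasDerivAt w (((deriv (deriv f) z + z * deriv (deriv (deriv f)) z) * deriv f z
      - z * deriv (deriv f) z * deriv (deriv f) z) / deriv f z ^ 2) z := by
    intro z hz
    have := ((hasDerivAt_id z).fun_mul (hd2 z hz)).fun_div (hd1 z hz) (hf' z hz)
    refine this.congr_deriv ?_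
    simp
  have hwdiff : DifferentiableOn ℂ w (ball 0 1) := fun z hz =>
    (hwd z hz).differentiableAt.differentiableWithinAt
  have hw0 : w 0 = 0 := by simp [hw]
  have hric : ∀ z ∈ ball (0:ℂ) 1, z * deriv w z * (1 - z) + w z ^ 2 + (c - 1) * w z
      = z * (w z ^ 2 + (b + 2) * w z + 2 * b) := by
    intro z hz
    rw [(hwd z hz).deriv]
    simp only [hw]
    have hG := hf' z hz
    have o := ode2 z hz
    generalize deriv (deriv (deriv f)) z = T at *
    generalize deriv (deriv f) z = H at *
    generalize deriv f z = G at *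
    field_simp
    linear_combination z * G * o
  have key : ∀ α : ℝ, α ≤ 1 → (∀ z ∈ ball (0:ℂ) 1, -α < (w z).re) → 
      ∀ z ∈ ball (0:ℂ) 1, 0 < (1 + z * deriv (deriv f) z / deriv f z).re := by
    intro α hα H z hz
    have := H z hz
    rw [add_re, one_re]
    simp only [hw] at this
    linarith
  rcases h with ⟨h2, hb2⟩ | h3
  · refine key (b/2) (by linarith) (aux_ric (b := b) (c := c) (D := b + 3 - c) (K := 2 * b - b / 2 * (b + 3 - c))
      hwdiff hw0 (by linarith) hric rfl rfl ?_ ?_ ?_ ?_)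
    · nlinarith
    · intro hK
      exfalso
      have : b * (1 + c - b) = 0 := by linarith
      have : 0 < b * (1 + c - b) := mul_pos hb (by linarith)
      linarith
    · have e : (b / 2 / 2 - (b / 2) ^ 2 + (c - 1) * (b / 2)) * (2 * b - b / 2 * (b + 3 - c))
        - (2 * b - b / 2 * (b + 3 - c)) ^ 2 / 2 = b ^ 2 * (1 + c - b) * (c - 2) / 8 := by ring
      have : 0 ≤ b ^ 2 * (1 + c - b) * (c - 2) / 8 := by
        have h1 : 0 ≤ 1 + c - b := by linarith
        have h2 : 0 ≤ c - 2 := by linarith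
        positivity
      linarith
    · have e : (1 / (2 * (b / 2)) + 1) * (2 * b - b / 2 * (b + 3 - c)) + (2 * (b / 2) - (c - 1)) * (b + 3 - c)
        - (b + 3 - c) ^ 2 / 2 = (1 + c - b) * (c - 2) / 2 := by field_simp; ring
      have : 0 ≤ (1 + c - b) * (c - 2) / 2 := by
        have h1 : 0 ≤ 1 + c - b := by linarith
        have h2 : 0 ≤ c - 2 := by linarith
        positivity
      linarith
  · rcases hbc.eq_or_lt with hbc' | hlt
    · subst hbc'
      have hfe : ∀ z ∈ ball (0:ℂ) 1, (1 - z) ^ 2 * deriv f z = 1 := by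
        intro z hz
        have hz1 : ‖z‖ < 1 := by simpa using hz
        have hne : ∀ y ∈ ball (0:ℂ) 1, 1 - y ≠ 0 := by
          intro y hy h
          have : y = 1 := by linear_combination -h
          subst this; simp at hy
        have he : f =ᶠ[𝓝 z] fun y => y / (1 - y) := by
          filter_upwards [hnhds z hz] with y hy
          have hcf : ∀ n, cf b b n = 1 := by
            intro n
            have : (ascPochhammer ℝ n).eval b ≠ 0 := (ascPochhammer_pos n b hb).ne'
            simp [cf, this]
          rw [hfdef]
          simp only [hyper_eq, hcf, ofReal_one, one_mul]
          rw [tsum_geometric_of_norm_lt_one (by simpa using hy)]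
          rfl
        have := (hasDerivAt_id z).fun_div ((hasDerivAt_id z).const_sub 1) (hne z hz)
        simp only [id] at this
        rw [he.deriv_eq, this.deriv]
        have := hne z hz
        field_simp
        ring
      intro z hz
      have hz1 : ‖z‖ < 1 := by simpa using hz
      have hne : 1 - z ≠ 0 := by
        intro h
        have := hfe z hz
        rw [h] at this; simp at this
      have H := (((hasDerivAt_id z).const_sub 1).fun_pow 2).fun_mul (hd1 z hz)
      have Z' := (hasDerivAt_const z (1:ℂ)).congr_of_eventuallyEq (f₁ := fun z => (1 - z) ^ 2 * deriv f z)
        (by filter_upwards [hnhds z hz] with y hy using hfe y hy)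
      have h5 := H.unique Z'
      simp only [id] at h5
      have h6 : (1 - z) * deriv (deriv f) z = 2 * deriv f z := by
        have : (1 - z) * ((1 - z) * deriv (deriv f) z - 2 * deriv f z) = 0 := by
          simp at h5
          linear_combination h5
        have := (mul_eq_zero.1 this).resolve_left hne
        linear_combination this
      have h7 : 1 + z * deriv (deriv f) z / deriv f z = (1 + z) / (1 - z) := by
        have := hf' z hz
        field_simp
        linear_combination z * h6
      rw [h7, div_re, ← add_div]
      refine div_pos ?_ (normSq_pos.2 hne)
      have h8 : normSq z < 1 := by
        rw [← Complex.sq_norm]; nlinarith [norm_nonneg z]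
      simp only [normSq_apply, sub_re, sub_im, add_re, add_im, one_re, one_im] at *
      nlinarith
    · refine key 1 le_rfl (aux_ric (b := b) (c := c) (D := b + 3 - c) (K := 2 * b - 1 * (b + 3 - c))
        hwdiff hw0 one_pos hric rfl rfl ?_ ?_ ?_ ?_)
      · linarith
      · intro hK
        exact ⟨by linarith, by linarith⟩
      · have e : (1 / 2 - 1 ^ 2 + (c - 1) * 1) * (2 * b - 1 * (b + 3 - c)) - (2 * b - 1 * (b + 3 - c)) ^ 2 / 2
          = (c - b) * (b + c - 3) / 2 := by ring
        have : 0 ≤ (c - b) * (b + c - 3) := mul_nonneg (by linarith) (by linarith)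
        linarith
      · have e : (1 / (2 * 1) + 1) * (2 * b - 1 * (b + 3 - c)) + (2 * 1 - (c - 1)) * (b + 3 - c)
          - (b + 3 - c) ^ 2 / 2 = (c - b) * (b + c - 3) / 2 := by ring
        have : 0 ≤ (c - b) * (b + c - 3) := mul_nonneg (by linarith) (by linarith)
        linarith

theorem stmt_19 (b c : ℝ) (hb : 0 < b) (hbc : b ≤ c)
    (h : (b ≤ 4 ∧ 2 ≤ c) ∨ (1 ≤ c ∧ c < min 2 (1 + b) ∧ 3 - b ≤ c)) :
    Set.InjOn (fun z : ℂ => z * hyperF 1 b c z) (Metric.ball (0 : ℂ) 1) ∧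
    Convex ℝ ((fun z : ℂ => z * hyperF 1 b c z) '' Metric.ball (0 : ℂ) 1) := by
  obtain ⟨hinj, hne⟩ := f_inj hb hbc
  have hf : DifferentiableOn ℂ (fun z : ℂ => z * hyperF 1 b c z) (ball 0 1) := fun z hz =>
    (f_props hb hbc z hz).2.2.differentiableAt.differentiableWithinAt
  refine ⟨hinj, aux_convex hf hinj hne (f_pos hb hbc ?_ rfl hf hne)⟩
  rcases h with ⟨h1, h2⟩ | ⟨h1, h2, h3⟩
  · by_cases hb2 : b ≤ 2
    · exact Or.inl ⟨h2, hb2⟩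
    · right; linarith
  · exact Or.inr h3
end
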